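/- arXiv:1304.1196 — 3 statements merged into one kernel-verified Lean document; each statement's English description precedes it below -/
import Mathlib

section
/- Let G be a finite group, M a finite F_p[G]-module, N an F_p[G]-submodule of M, and x : G × G → N a normalized 2-cocycle. Suppose H is a subgroup of M ⋊_x G with H ∩ (M × {e}) = N × {e} which surjects onto G under (m,g) ↦ g, and suppose θ : N ⋊_x G → H is a group isomorphism which restricts to the identity on N × {e} and commutes with the projections to G. If every 1-cocycle G → M is a coboundary (i.e. H¹(G,M) = 0), then there exists m ∈ M such that θ(n,g) = (m,e)⁻¹ (n,g) (m,e) for all (n,g) ∈ N ⋊_x G; in particular H = (m,e)⁻¹ (N ⋊_x G) (m,e). -/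
/-!
Put `ξ g = (θ (0, g)).fst`, so that `θ (0, g) = (ξ g, g)`.  Since `(n, g) = (n, 1) (0, g)` and `θ`
fixes `(n, 1)`, one gets `θ (n, g) = (n + ξ g, g)` (`TwistedProd.fst_theta`).  Applying `θ` to
`(0, g) (0, h) = (x(g, h), g h)` and cancelling `x(g, h)` shows that `ξ` is a 1-cocycle, hence
`ξ g = g • m - m` for some `m`.  On the other hand, conjugation by `(m, 1)` sends `(n, g)` to
`(n + (g • m - m), g)` (`TwistedProd.fst_conj`), so it agrees with `θ`.  The description of `H`
follows because `θ` is onto `H`.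
-/

set_option linter.unusedVariables false
set_option linter.unusedSectionVars false

section

variable {G : Type} [Group G] {M : Type} [AddCommGroup M] [DistribMulAction G M]

/-- A normalized 2-cocycle of the group `G` with values in the `G`-module `M`. -/
structure NormalizedTwoCocycle (G M : Type) [Group G] [AddCommGroup M]
    [DistribMulAction G M] where
  toFun : G → G → M
  norm_left : ∀ g, toFun 1 g = 0
  norm_right : ∀ g, toFun g 1 = 0
  cocycle : ∀ g₁ g₂ g₃,
    g₁ • toFun g₂ g₃ - toFun (g₁ * g₂) g₃ + toFun g₁ (g₂ * g₃) - toFun g₁ g₂ = 0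

/-- The twisted semidirect product `M ⋊ₓ G`, with underlying set `M × G`. -/
def TwistedProd (c : NormalizedTwoCocycle G M) : Type := M × G

namespace TwistedProd

variable {c : NormalizedTwoCocycle G M}

/-- The element `(v, g)` of `M ⋊ₓ G`. -/
def mk (c : NormalizedTwoCocycle G M) (v : M) (g : G) : TwistedProd c := (v, g)

/-- The first component of an element of `M ⋊ₓ G`. -/
def fst (a : TwistedProd c) : M := Prod.fst a

/-- The second component of an element of `M ⋊ₓ G`. -/
def snd (a : TwistedProd c) : G := Prod.snd a

@[simp] lemma fst_mk (v : M) (g : G) : (mk c v g).fst = v := rfl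
@[simp] lemma snd_mk (v : M) (g : G) : (mk c v g).snd = g := rfl

@[ext] lemma ext {a b : TwistedProd c} (h1 : a.fst = b.fst) (h2 : a.snd = b.snd) : a = b :=
  Prod.ext h1 h2

instance : Mul (TwistedProd c) :=
  ⟨fun a b => mk c (c.toFun a.snd b.snd + a.fst + a.snd • b.fst) (a.snd * b.snd)⟩

instance : One (TwistedProd c) := ⟨mk c 0 1⟩

instance : Inv (TwistedProd c) :=
  ⟨fun a => mk c (-(a.snd⁻¹ • a.fst) - c.toFun a.snd⁻¹ a.snd) a.snd⁻¹⟩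

@[simp] lemma fst_mul (a b : TwistedProd c) :
    (a * b).fst = c.toFun a.snd b.snd + a.fst + a.snd • b.fst := rfl

@[simp] lemma snd_mul (a b : TwistedProd c) : (a * b).snd = a.snd * b.snd := rfl

@[simp] lemma fst_one : (1 : TwistedProd c).fst = 0 := rfl
@[simp] lemma snd_one : (1 : TwistedProd c).snd = 1 := rfl

instance : Group (TwistedProd c) :=
  Group.ofLeftAxioms
    (fun a b d => by
      have h := c.cocycle a.snd b.snd d.snd
      refine TwistedProd.ext ?_ (mul_assoc a.snd b.snd d.snd)
      show c.toFun (a.snd * b.snd) d.snd + (c.toFun a.snd b.snd + a.fst + a.snd • b.fst) +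
            (a.snd * b.snd) • d.fst
          = c.toFun a.snd (b.snd * d.snd) + a.fst +
            a.snd • (c.toFun b.snd d.snd + b.fst + b.snd • d.fst)
      rw [mul_smul, smul_add, smul_add, ← sub_eq_zero]
      calc c.toFun (a.snd * b.snd) d.snd + (c.toFun a.snd b.snd + a.fst + a.snd • b.fst) +
              a.snd • (b.snd • d.fst) -
              (c.toFun a.snd (b.snd * d.snd) + a.fst +
                (a.snd • c.toFun b.snd d.snd + a.snd • b.fst + a.snd • (b.snd • d.fst)))
          = -(a.snd • c.toFun b.snd d.snd - c.toFun (a.snd * b.snd) d.snd +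
              c.toFun a.snd (b.snd * d.snd) - c.toFun a.snd b.snd) := by abel
        _ = 0 := by rw [h, neg_zero])
    (fun a => by
      refine TwistedProd.ext ?_ (one_mul a.snd)
      show c.toFun 1 a.snd + 0 + (1 : G) • a.fst = a.fst
      rw [c.norm_left, one_smul, zero_add, zero_add])
    (fun a => by
      refine TwistedProd.ext ?_ (inv_mul_cancel a.snd)
      show c.toFun a.snd⁻¹ a.snd + (-(a.snd⁻¹ • a.fst) - c.toFun a.snd⁻¹ a.snd) +
            a.snd⁻¹ • a.fst = 0
      abel)

end TwistedProd

variable (p : ℕ) [Fact p.Prime] [Module (ZMod p) M] [SMulCommClass G (ZMod p) M]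

/-- Given an `𝔽_p[G]`-submodule `N` of `M` and a normalized 2-cocycle `x` of `G` valued in
`N`, the subgroup `N ⋊ₓ G = N × G` of the twisted semidirect product `M ⋊ₓ G`. -/
def TwistedProd.subgroupOf (c : NormalizedTwoCocycle G M) (N : Submodule (ZMod p) M)
    (hN : ∀ (g : G) (v : M), v ∈ N → g • v ∈ N)
    (hc : ∀ g₁ g₂, c.toFun g₁ g₂ ∈ N) : Subgroup (TwistedProd c) where
  carrier := {a | a.fst ∈ N}
  mul_mem' := fun {a b} ha hb =>
    N.add_mem (N.add_mem (hc _ _) ha) (hN _ _ hb)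
  one_mem' := N.zero_mem
  inv_mem' := fun {a} ha => N.sub_mem (N.neg_mem (hN _ _ ha)) (hc _ _)

lemma TwistedProd.mem_subgroupOf {c : NormalizedTwoCocycle G M} {N : Submodule (ZMod p) M}
    {hN : ∀ (g : G) (v : M), v ∈ N → g • v ∈ N} {hc : ∀ g₁ g₂, c.toFun g₁ g₂ ∈ N}
    (a : TwistedProd c) : a ∈ TwistedProd.subgroupOf p c N hN hc ↔ a.fst ∈ N := Iff.rfl

lemma TwistedProd.mk_zero_mem {c : NormalizedTwoCocycle G M} {N : Submodule (ZMod p) M}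
    {hN : ∀ (g : G) (v : M), v ∈ N → g • v ∈ N} {hc : ∀ g₁ g₂, c.toFun g₁ g₂ ∈ N}
    (g : G) : TwistedProd.mk c 0 g ∈ TwistedProd.subgroupOf p c N hN hc := N.zero_mem

lemma TwistedProd.fst_conj {c : NormalizedTwoCocycle G M} (m : M) (a : TwistedProd c) :
    ((TwistedProd.mk c m 1)⁻¹ * a * TwistedProd.mk c m 1).fst = a.fst + (a.snd • m - m) := by
  have hinv : (TwistedProd.mk c m 1)⁻¹ = TwistedProd.mk c (-m) 1 := by
    rw [inv_eq_iff_mul_eq_one]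
    apply TwistedProd.ext <;> simp [c.norm_left]
  rw [hinv]
  simp only [fst_mul, snd_mul, fst_mk, snd_mk, c.norm_left, c.norm_right, one_mul, one_smul]
  abel

lemma TwistedProd.snd_conj {c : NormalizedTwoCocycle G M} (m : M) (a : TwistedProd c) :
    ((TwistedProd.mk c m 1)⁻¹ * a * TwistedProd.mk c m 1).snd = a.snd := by
  have hinv : (TwistedProd.mk c m 1)⁻¹.snd = 1 := inv_one
  simp [hinv]

/-- An isomorphism `N ⋊ₓ G ≃ H` that fixes `N × {1}` pointwise is determined, in its first
component, by its values on the elements `(0, g)`; this is the factorization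
`(n, g) = (n, 1) (0, g)`. -/
lemma TwistedProd.fst_theta {c : NormalizedTwoCocycle G M} {N : Submodule (ZMod p) M}
    {hN : ∀ (g : G) (v : M), v ∈ N → g • v ∈ N} {hc : ∀ g₁ g₂, c.toFun g₁ g₂ ∈ N}
    {H : Subgroup (TwistedProd c)} (θ : TwistedProd.subgroupOf p c N hN hc ≃* H)
    (hθ_res : ∀ (a : TwistedProd c) (ha : a ∈ TwistedProd.subgroupOf p c N hN hc),
      a.snd = 1 → ((θ ⟨a, ha⟩ : TwistedProd c) = a))
    (a : TwistedProd.subgroupOf p c N hN hc) :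
    (θ a : TwistedProd c).fst = (a : TwistedProd c).fst +
      (θ ⟨TwistedProd.mk c 0 (a : TwistedProd c).snd, mk_zero_mem p _⟩ : TwistedProd c).fst := by
  obtain ⟨a, ha⟩ := a
  have hmem : TwistedProd.mk c a.fst 1 ∈ TwistedProd.subgroupOf p c N hN hc := ha
  have hfac : (⟨a, ha⟩ : TwistedProd.subgroupOf p c N hN hc) =
      ⟨TwistedProd.mk c a.fst 1, hmem⟩ * ⟨TwistedProd.mk c 0 a.snd, mk_zero_mem p _⟩ := by
    apply Subtype.ext
    apply TwistedProd.ext <;> simp [c.norm_left]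
  have h := congrArg (fun b => (θ b : TwistedProd c).fst) hfac
  simp only [map_mul, Subgroup.coe_mul, hθ_res _ hmem rfl, fst_mul, fst_mk, snd_mk,
    c.norm_left, zero_add, one_smul] at h
  exact h

/-- **(Proposition, part (iii)).**  Let `G` be a finite group, `M` a finite `𝔽_p[G]`-module,
`N` an `𝔽_p[G]`-submodule of `M`, and `x : G × G → N` a normalized 2-cocycle.  Let `H` be a
subgroup of `M ⋊ₓ G` with `H ∩ (M × {e}) = N × {e}` surjecting onto `G`, and let
`θ : N ⋊ₓ G ≃ H` be an isomorphism restricting to the identity on `N × {e}` and commuting with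
the projections to `G`.  If `H¹(G, M) = 0` (every 1-cocycle `G → M` is a coboundary), then
there exists `m ∈ M` such that `θ` is conjugation by `(m, e)`; in particular
`H = (m, e)⁻¹ (N ⋊ₓ G) (m, e)`. -/
theorem theta_is_conjugation
    [Finite G] [Finite M]
    (c : NormalizedTwoCocycle G M) (N : Submodule (ZMod p) M)
    (hN : ∀ (g : G) (v : M), v ∈ N → g • v ∈ N)
    (hc : ∀ g₁ g₂, c.toFun g₁ g₂ ∈ N)
    (H : Subgroup (TwistedProd c))
    (hH_inter : ∀ a : TwistedProd c, a.snd = 1 → (a ∈ H ↔ a.fst ∈ N))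
    (hH_surj : ∀ g : G, ∃ a ∈ H, a.snd = g)
    (θ : TwistedProd.subgroupOf p c N hN hc ≃* H)
    (hθ_res : ∀ (a : TwistedProd c) (ha : a ∈ TwistedProd.subgroupOf p c N hN hc),
      a.snd = 1 → ((θ ⟨a, ha⟩ : TwistedProd c) = a))
    (hθ_proj : ∀ a : TwistedProd.subgroupOf p c N hN hc,
      ((θ a : TwistedProd c)).snd = (a : TwistedProd c).snd)
    (hH1 : ∀ ξ : G → M, (∀ g₁ g₂ : G, ξ (g₁ * g₂) = ξ g₁ + g₁ • ξ g₂) →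
      ∃ m : M, ∀ g : G, ξ g = g • m - m) :
    ∃ m : M,
      (∀ a : TwistedProd.subgroupOf p c N hN hc,
        (θ a : TwistedProd c) =
          (TwistedProd.mk c m 1)⁻¹ * (a : TwistedProd c) * TwistedProd.mk c m 1) ∧
      (∀ b : TwistedProd c, b ∈ H ↔
        ∃ a ∈ TwistedProd.subgroupOf p c N hN hc,
          b = (TwistedProd.mk c m 1)⁻¹ * a * TwistedProd.mk c m 1) := by
  have hcocycle : ∀ g₁ g₂ : G,
      (θ ⟨TwistedProd.mk c 0 (g₁ * g₂), TwistedProd.mk_zero_mem p _⟩ : TwistedProd c).fst =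
        (θ ⟨TwistedProd.mk c 0 g₁, TwistedProd.mk_zero_mem p _⟩ : TwistedProd c).fst +
        g₁ • (θ ⟨TwistedProd.mk c 0 g₂, TwistedProd.mk_zero_mem p _⟩ : TwistedProd c).fst := by
    intro g₁ g₂
    -- Compare the two ways of evaluating `θ ((0, g₁) (0, g₂))`, where
    -- `(0, g₁) (0, g₂) = (x(g₁, g₂), g₁ g₂)`.
    have h := TwistedProd.fst_theta p θ hθ_res
      (⟨TwistedProd.mk c 0 g₁, TwistedProd.mk_zero_mem p _⟩ *
        ⟨TwistedProd.mk c 0 g₂, TwistedProd.mk_zero_mem p _⟩)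
    simp only [map_mul, Subgroup.coe_mul, TwistedProd.fst_mul, TwistedProd.snd_mul, hθ_proj,
      TwistedProd.fst_mk, TwistedProd.snd_mk, smul_zero, add_zero, add_assoc] at h
    exact (add_left_cancel h).symm
  obtain ⟨m, hm⟩ := hH1 (fun g =>
    (θ ⟨TwistedProd.mk c 0 g, TwistedProd.mk_zero_mem p _⟩ : TwistedProd c).fst) hcocycle
  have hconj : ∀ a : TwistedProd.subgroupOf p c N hN hc,
      (θ a : TwistedProd c) =
        (TwistedProd.mk c m 1)⁻¹ * (a : TwistedProd c) * TwistedProd.mk c m 1 := by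
    intro a
    apply TwistedProd.ext
    · rw [TwistedProd.fst_theta p θ hθ_res, TwistedProd.fst_conj, ← hm]
    · rw [hθ_proj, TwistedProd.snd_conj]
  refine ⟨m, hconj, fun b => ⟨fun hb => ?_, ?_⟩⟩
  · obtain ⟨a, ha⟩ := θ.surjective ⟨b, hb⟩
    exact ⟨a, a.2, by rw [← hconj a, ha]⟩
  · rintro ⟨a, ha, rfl⟩
    rw [← hconj ⟨a, ha⟩]
    exact (θ ⟨a, ha⟩).2

end
end

section
/- Let 𝕜 be a finite field of characteristic p and n ≥ 2, with 𝕜 ≠ F_2 if n = 2. If X is an F_p[SL_n(𝕜)]-submodule of M₀(𝕜) (trace-zero n×n matrices over 𝕜 with SL_n(𝕜) acting by conjugation), then either X is contained in the subspace S of scalar matrices in M₀(𝕜), or X = M₀(𝕜). In particular M₀(𝕜)/S is a simple F_p[SL_n(𝕜)]-module, and when p divides n the exact sequence 0 → S → M₀(𝕜) → M₀(𝕜)/S → 0 of F_p[SL_n(𝕜)]-modules does not split. -/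
/-!
Let `X` be an additive group of trace-zero matrices stable under conjugation by `SL_n(𝕜)`, and
write `E_ij` for the matrix units. Only transvections `1 + t E_ij` are needed: conjugating `A ∈ X`
and subtracting `A` gives `[tE_ij, A] - t² A_ji E_ij ∈ X` (`TransvStable`). From this operation:

* If `X` contains a non-scalar matrix, it contains a full root line `𝕜 E_ij`
  (`TransvStable.exists_line`). If the matrix is diagonal this takes one step. Otherwise it has an
  entry `A_ji ≠ 0`. In odd characteristic, adding the elements for `t` and `-t` leaves
  `-2 t² A_ji E_ij`, and differences of squares exhaust `𝕜`. If a third index is available, three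
  further transvections isolate a line. In characteristic two with `n = 2` the element is
  `c (t + t² E_ij)`; since every element is a square, comparing transvections in the opposite
  direction with parameters `1` and `u ∉ {0, 1}` isolates a line.
* One root line generates all root lines (`TransvStable.line_all`), by commutators through a third
  index, or for `n = 2` again by means of some `u ∉ {0, 1}`.
* All root lines generate the trace-zero matrices (`TransvStable.mem_of_trace_eq_zero`).

If `p ∣ n`, a stable complement of the scalars is therefore either zero, which is impossible as
`E_01` is not scalar, or everything, which is impossible as the identity has trace zero.
-/

/-! ### Stability under transvections -/

/-- The additive subgroup `X` of matrices is stable under `A ↦ T A T⁻¹ - A` for all transvections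
`T = 1 + t E_ij`, where the value is expanded as `t E_ij A - A t E_ij - (t A_ji t) E_ij`. -/
def TransvStable {ι K : Type*} [Fintype ι] [DecidableEq ι] [Field K]
    (X : AddSubgroup (Matrix ι ι K)) : Prop :=
  ∀ i j : ι, i ≠ j → ∀ t : K, ∀ A ∈ X,
    Matrix.single i j t * A - A * Matrix.single i j t - Matrix.single i j (t * A j i * t) ∈ X

namespace TransvStable

variable {ι K : Type*} [Fintype ι] [DecidableEq ι] [Field K] {X : AddSubgroup (Matrix ι ι K)}

open Matrix

/-- Invariance under conjugation by `SL` gives stability under the transvection operation. -/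
theorem of_conj
    (h : ∀ g : Matrix.SpecialLinearGroup ι K, ∀ A ∈ X,
      (g : Matrix ι ι K) * A * ((g⁻¹ : Matrix.SpecialLinearGroup ι K) : Matrix ι ι K) ∈ X) :
    TransvStable X := by
  intro i j hij t A hA
  let g : Matrix.SpecialLinearGroup ι K := ⟨transvection i j t, det_transvection_of_ne i j hij t⟩
  let g' : Matrix.SpecialLinearGroup ι K :=
    ⟨transvection i j (-t), det_transvection_of_ne i j hij (-t)⟩
  have hinv : g⁻¹ = g' := by
    apply inv_eq_of_mul_eq_one_right
    apply Subtype.ext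
    change transvection i j t * transvection i j (-t) = 1
    rw [transvection_mul_transvection_same i j hij]
    simp
  have hmem := h g A hA
  rw [hinv] at hmem
  have := X.sub_mem hmem hA
  convert this using 1
  have hE : single i j t * A * single i j t = single i j (t * A j i * t) := by
    simp
  change _ = transvection i j t * A * transvection i j (-t) - A
  rw [← hE, transvection, transvection, ← single_neg]
  noncomm_ring

/-! ### Root lines generate each other -/

/-- The commutator of `t E_ki` with `c E_ij`, for three distinct indices. -/
theorem row_move (hX : TransvStable X) {i j k : ι} (hki : k ≠ i) (hkj : k ≠ j)
    {c : K} (hc : single i j c ∈ X) (t : K) : single k j (t * c) ∈ X := by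
  have := hX k i hki t _ hc
  simpa [hki, hkj, hki.symm, hkj.symm, single_apply] using this

theorem col_move (hX : TransvStable X) {i j k : ι} (hki : k ≠ i) (hkj : k ≠ j)
    {c : K} (hc : single i j c ∈ X) (t : K) : single i k (c * t) ∈ X := by
  have := hX j k hkj.symm t _ hc
  have := X.neg_mem this
  simpa [hki, hkj, hki.symm, hkj.symm, single_apply] using this

/-- A nonzero multiple of `E_ij` generates the line `𝕜 E_kj` for `k ≠ i, j`. -/
theorem row_line (hX : TransvStable X) {i j k : ι} (hki : k ≠ i) (hkj : k ≠ j)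
    {c : K} (hc0 : c ≠ 0) (hc : single i j c ∈ X) (s : K) : single k j s ∈ X := by
  have := hX.row_move hki hkj hc (s * c⁻¹)
  rwa [mul_assoc, inv_mul_cancel₀ hc0, mul_one] at this

theorem col_line (hX : TransvStable X) {i j k : ι} (hki : k ≠ i) (hkj : k ≠ j)
    (h : ∀ s : K, single i j s ∈ X) (s : K) : single i k s ∈ X := by
  simpa using hX.col_move hki hkj (h 1) s

/-- The operation for `s E_ji` applied to `c E_ij`. -/
theorem opposite (hX : TransvStable X) {i j : ι} (hij : i ≠ j) {c : K} (hc : single i j c ∈ X)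
    (s : K) : single j j (s * c) - single i i (c * s) - single j i (s * c * s) ∈ X := by
  have := hX j i hij.symm s _ hc
  simpa using this

/-- Passing from a root line to its opposite when `𝕜` has an element `u ∉ {0, 1}`. -/
theorem opposite_line (hX : TransvStable X) {i j : ι} (hij : i ≠ j) {u : K} (hu0 : u ≠ 0)
    (hu1 : u ≠ 1) (h : ∀ s : K, single i j s ∈ X) (s : K) : single j i s ∈ X := by
  have hu : u * u - u ≠ 0 := by
    have : u * u - u = u * (u - 1) := by ring
    rw [this]
    exact mul_ne_zero hu0 (sub_ne_zero.mpr hu1)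
  -- Both elements have diagonal part `l u (E_jj - E_ii)`, so their difference is `l (u² - u) E_ji`.
  set l := s * (u * u - u)⁻¹ with hl
  have h1 := hX.opposite hij (h l) u
  have h2 := hX.opposite hij (h (u * l)) 1
  have h3 := X.sub_mem h2 h1
  have e : s = u * l * u - u * l := by
    rw [hl]
    field_simp
  rw [e, sub_eq_add_neg, single_add, ← single_neg]
  convert h3 using 1
  rw [one_mul, mul_one, mul_comm l u]
  abel

/-- One root line generates all of them, given a third index or an element `u ∉ {0, 1}`. -/
theorem line_all (hX : TransvStable X)
    (hk : ∀ i j : ι, i ≠ j → (∃ k, k ≠ i ∧ k ≠ j) ∨ ∃ u : K, u ≠ 0 ∧ u ≠ 1)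
    {i j : ι} (hij : i ≠ j) (h : ∀ s : K, single i j s ∈ X) (a b : ι) (hab : a ≠ b) (s : K) :
    single a b s ∈ X := by
  have row : ∀ {i j : ι}, (∀ s : K, single i j s ∈ X) → ∀ a, a ≠ j → ∀ s : K, single a j s ∈ X := by
    intro i j h a haj s
    by_cases hai : a = i
    · rw [hai]
      exact h s
    · exact hX.row_line hai haj one_ne_zero (h 1) s
  have col : ∀ {i j : ι}, (∀ s : K, single i j s ∈ X) → ∀ b, b ≠ i → ∀ s : K, single i b s ∈ X := by
    intro i j h b hbi s
    by_cases hbj : b = j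
    · rw [hbj]
      exact h s
    · exact hX.col_line hbi hbj h s
  by_cases haj : a = j
  · subst haj
    by_cases hbi : b = i
    · subst hbi
      rcases hk b a hij with ⟨k, hkb, hka⟩ | ⟨u, hu0, hu1⟩
      · exact row (col (row h k hka) b hkb.symm) a hab s
      · exact hX.opposite_line hij hu0 hu1 h s
    · exact row (col h b hbi) a hab s
  · exact col (row h a haj) b hab.symm s

/-! ### Root lines generate the trace-zero matrices -/

theorem mem_of_trace_eq_zero (hX : TransvStable X) [Nonempty ι]
    (h : ∀ a b : ι, a ≠ b → ∀ s : K, single a b s ∈ X) (A : Matrix ι ι K) (hA : A.trace = 0) :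
    A ∈ X := by
  obtain ⟨o⟩ := ‹Nonempty ι›
  have hd : ∀ (i : ι) (c : K), single i i c - single o o c ∈ X := by
    intro i c
    by_cases hio : i = o
    · rw [hio, sub_self]
      exact X.zero_mem
    · have := X.add_mem (hX.opposite (Ne.symm hio) (h o i (Ne.symm hio) c) 1)
        (h i o hio (1 * c * 1))
      simpa using this
  -- Since `A` has trace zero, subtracting `A_ii E_oo` from each diagonal term changes nothing.
  have e : A = ∑ i, ∑ j, (single i j (A i j) - if i = j then single o o (A i i) else 0) := by
    have hz : ∑ i, single o o (A i i) = (0 : Matrix ι ι K) := by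
      have : ∑ i, A i i = 0 := hA
      exact (map_sum (singleAddMonoidHom o o) (fun i => A i i) Finset.univ).symm.trans
        (by rw [this, map_zero])
    simp only [Finset.sum_sub_distrib, Finset.sum_ite_eq, Finset.mem_univ, if_true]
    rw [hz, sub_zero]
    exact matrix_eq_sum_single A
  rw [e]
  refine X.sum_mem fun i _ => X.sum_mem fun j _ => ?_
  by_cases hij : i = j
  · subst hij
    simpa using hd i (A i i)
  · simpa [hij] using h i j hij (A i j)

/-! ### Root lines from a non-scalar matrix -/

/-- Odd characteristic: the elements for `t` and `-t` add up to `-2 t² A_ji E_ij`, and every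
element of the field is a difference of two squares. -/
theorem line_of_two_ne_zero (hX : TransvStable X) (h2 : (2 : K) ≠ 0) {A : Matrix ι ι K}
    (hA : A ∈ X) {i j : ι} (hij : i ≠ j) (hc : A j i ≠ 0) (s : K) : single i j s ∈ X := by
  have hsq : ∀ t : K, single i j (2 * A j i * (t * t)) ∈ X := by
    intro t
    have h3 := X.neg_mem (X.add_mem (hX i j hij t A hA) (hX i j hij (-t) A hA))
    have e : 2 * A j i * (t * t) = t * A j i * t + -t * A j i * -t := by ring
    rw [e, single_add]
    convert h3 using 1
    rw [← single_neg i j t]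
    noncomm_ring
  set w := s * (2 * A j i)⁻¹ with hw
  have h3 := X.sub_mem (hsq ((w + 1) / 2)) (hsq ((w - 1) / 2))
  have e : s = 2 * A j i * ((w + 1) / 2 * ((w + 1) / 2))
      - 2 * A j i * ((w - 1) / 2 * ((w - 1) / 2)) := by
    have : s = 2 * A j i * w := by
      rw [hw]
      field_simp
    rw [this]
    field_simp
    ring
  rw [e, sub_eq_add_neg, single_add, ← single_neg, ← sub_eq_add_neg]
  exact h3

/-- With a third index `k`: the operations for `E_ij` and then `E_ik` turn `A` into
`-A_ki E_ij - A_ji E_ik`, and the one for `E_kj` extracts `A_ji E_ij`,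
which generates the line `𝕜 E_kj`. -/
theorem line_of_third_index (hX : TransvStable X) {A : Matrix ι ι K} (hA : A ∈ X) {i j k : ι}
    (hij : i ≠ j) (hki : k ≠ i) (hkj : k ≠ j) (hc : A j i ≠ 0) (s : K) : single k j s ∈ X := by
  have h1 := hX i j hij 1 A hA
  have h2 := hX i k hki.symm 1 _ h1
  have e2 : single i k 1 * (single i j 1 * A - A * single i j 1 - single i j (1 * A j i * 1))
      - (single i j 1 * A - A * single i j 1 - single i j (1 * A j i * 1)) * single i k 1
      - single i k (1 * (single i j (1 : K) * A - A * single i j (1 : K)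
        - single i j (1 * A j i * 1) : Matrix ι ι K) k i * 1)
      = -single i j (A k i) - single i k (A j i) := by
    have z : (single i j (1 : K) * A - A * single i j (1 : K)
        - single i j (1 * A j i * 1) : Matrix ι ι K) k i = 0 := by
      simp [hki, hki.symm, hij, hij.symm, Matrix.sub_apply]
    rw [z]
    simp only [mul_sub, sub_mul, ← mul_assoc]
    rw [mul_assoc A]
    simp [hki, hij.symm]
  rw [e2] at h2
  have h3 := hX k j hkj 1 _ h2
  have e3 : single k j 1 * (-single i j (A k i) - single i k (A j i))
      - (-single i j (A k i) - single i k (A j i)) * single k j 1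
      - single k j (1 * (-single i j (A k i) - single i k (A j i)) j k * 1)
      = single i j (A j i) := by
    simp [hij, hij.symm, hkj.symm, mul_sub, sub_mul]
  rw [e3] at h3
  exact hX.row_line hki hkj hc h3 s

/-- Characteristic two and two indices: the operation for `t E_ij` produces `c (t + t² E_ij)` with
`c = A_ji`, and applying that for `v E_ji` gives `c t² (v + v² E_ji)`. As `t²` is arbitrary, the
choices `v = 1` and `v = u` can be matched in their scalar parts. -/
theorem line_of_char_two [Finite K] [CharP K 2] (hX : TransvStable X) {A : Matrix ι ι K}
    (hA : A ∈ X) (htr : A.trace = 0) {i j : ι} (hij : i ≠ j) (hι : ∀ k, k = i ∨ k = j)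
    (hc : A j i ≠ 0) {u : K} (hu0 : u ≠ 0) (hu1 : u ≠ 1) (s : K) : single j i s ∈ X := by
  have huniv : (Finset.univ : Finset ι) = {i, j} := by
    ext k
    simpa using hι k
  have hdiag : A i i = A j j := by
    have : A i i + A j j = 0 := by
      simpa [Matrix.trace, huniv, hij] using htr
    rwa [CharTwo.add_eq_zero] at this
  have h1 : ∀ t : K, single i i (t * A j i) + single j j (t * A j i)
      + single i j (t * A j i * t) ∈ X := by
    intro t
    have := hX i j hij t A hA
    convert this using 1
    ext a b
    rcases hι a with rfl | rfl <;> rcases hι b with rfl | rfl <;>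
      simp [hij, hij.symm, hdiag, CharTwo.sub_eq_add, mul_comm, CharTwo.add_self_eq_zero]
  have h2 : ∀ w v : K, single j j (v * w * A j i) + single i i (v * w * A j i)
      + single j i (v * w * A j i * v) ∈ X := by
    intro w v
    obtain ⟨t, rfl⟩ : IsSquare w := FiniteField.isSquare_of_char_two (ringChar.eq K 2) w
    have := hX j i hij.symm v _ (h1 t)
    convert this using 1
    ext a b
    rcases hι a with rfl | rfl <;> rcases hι b with rfl | rfl <;>
      simp [hij, hij.symm, CharTwo.sub_eq_add, mul_add, add_mul] <;> grind
  set l := s * (A j i)⁻¹ * (u - 1)⁻¹ with hl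
  have hu : u - 1 ≠ 0 := sub_ne_zero.mpr hu1
  have h3 := X.sub_mem (h2 (l * u⁻¹) u) (h2 l 1)
  have e : s = u * (l * u⁻¹) * A j i * u - 1 * l * A j i * 1 := by
    rw [hl]
    field_simp
  have e' : u * (l * u⁻¹) = 1 * l := by
    field_simp
  rw [e, sub_eq_add_neg, single_add, ← single_neg, e']
  rw [e'] at h3
  convert h3 using 1
  abel

/-- A non-scalar matrix in `X` yields a full root line in `X`. -/
theorem exists_line [Finite K] (hX : TransvStable X)
    (hk : ∀ i j : ι, i ≠ j → (∃ k, k ≠ i ∧ k ≠ j) ∨ ∃ u : K, u ≠ 0 ∧ u ≠ 1)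
    {A : Matrix ι ι K} (hA : A ∈ X) (htr : A.trace = 0)
    (hns : ¬ ∃ c : K, A = c • (1 : Matrix ι ι K)) :
    ∃ i j : ι, i ≠ j ∧ ∀ s : K, single i j s ∈ X := by
  by_cases hoff : ∃ i j, i ≠ j ∧ A j i ≠ 0
  · obtain ⟨i, j, hij, hc⟩ := hoff
    by_cases h2 : (2 : K) = 0
    · by_cases h3 : ∃ k, k ≠ i ∧ k ≠ j
      · obtain ⟨k, hki, hkj⟩ := h3
        exact ⟨k, j, hkj, hX.line_of_third_index hA hij hki hkj hc⟩
      · obtain ⟨u, hu0, hu1⟩ := (hk i j hij).resolve_left h3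
        have : CharP K 2 := CharTwo.of_one_ne_zero_of_two_eq_zero one_ne_zero h2
        refine ⟨j, i, hij.symm, hX.line_of_char_two hA htr hij ?_ hc hu0 hu1⟩
        intro k
        by_contra hcon
        exact h3 ⟨k, not_or.mp hcon⟩
    · exact ⟨i, j, hij, hX.line_of_two_ne_zero h2 hA hij hc⟩
  · have hoff' : ∀ i j, i ≠ j → A i j = 0 := by
      intro i j hij
      by_contra h
      exact hoff ⟨j, i, hij.symm, h⟩
    have hne : ∃ i j, A i i ≠ A j j := by
      by_contra hcon
      push Not at hcon
      apply hns
      rcases isEmpty_or_nonempty ι with hι | ⟨⟨o⟩⟩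
      · exact ⟨0, Subsingleton.elim _ _⟩
      · refine ⟨A o o, ?_⟩
        ext a b
        by_cases hab : a = b
        · subst hab
          simp [hcon a o]
        · simp [hab, hoff' a b hab]
    obtain ⟨i, j, hd⟩ := hne
    have hij : i ≠ j := by
      rintro rfl
      exact hd rfl
    refine ⟨i, j, hij, fun s => ?_⟩
    have hd' : A j j - A i i ≠ 0 := sub_ne_zero.mpr hd.symm
    have := hX i j hij (s * (A j j - A i i)⁻¹) A hA
    convert this using 1
    have es : s = s * (A j j - A i i)⁻¹ * A j j - A i i * (s * (A j j - A i i)⁻¹) := by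
      field_simp
    generalize s * (A j j - A i i)⁻¹ = t at es ⊢
    have e1 : single i j t * A = single i j (t * A j j) := by
      ext a b
      by_cases hai : a = i
      · subst hai
        by_cases hbj : b = j
        · subst hbj
          simp
        · simp [hoff' j b (Ne.symm hbj), Ne.symm hbj]
      · simp [hai, Ne.symm hai]
    have e2 : A * single i j t = single i j (A i i * t) := by
      ext a b
      by_cases hbj : b = j
      · subst hbj
        by_cases hai : a = i
        · subst hai
          simp
        · simp [hoff' a i hai, Ne.symm hai]
      · simp [hbj, Ne.symm hbj]
    rw [hoff' j i hij.symm, e1, e2, es, sub_eq_add_neg, single_add, ← single_neg]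
    simp [sub_eq_add_neg]

/-- A stable group of trace-zero matrices is either scalar or everything. -/
theorem scalar_or_top [Finite K] [Nonempty ι] (hX : TransvStable X)
    (hk : ∀ i j : ι, i ≠ j → (∃ k, k ≠ i ∧ k ≠ j) ∨ ∃ u : K, u ≠ 0 ∧ u ≠ 1)
    (htr : ∀ A ∈ X, A.trace = 0) :
    (∀ A ∈ X, ∃ c : K, A = c • (1 : Matrix ι ι K)) ∨ ∀ A : Matrix ι ι K, A.trace = 0 → A ∈ X := by
  by_contra hcon
  obtain ⟨h1, h2⟩ := not_or.mp hcon
  push Not at h1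
  obtain ⟨A, hA, hns⟩ := h1
  obtain ⟨i, j, hij, hl⟩ := hX.exists_line hk hA (htr A hA) (by simpa using hns)
  exact h2 fun B hB => hX.mem_of_trace_eq_zero (hX.line_all hk hij hl) B hB

end TransvStable

/-! ### Submodules of the trace-zero matrices over a finite field -/

section

variable (p n : ℕ) [Fact p.Prime] (𝕜 : Type) [Field 𝕜] [Fintype 𝕜] [CharP 𝕜 p]

/-- The `𝔽_p`-module structure on `𝕜` (characteristic `p`). -/
noncomputable local instance : Algebra (ZMod p) 𝕜 := ZMod.algebra 𝕜 p

/-- Let `𝕜` be a finite field of characteristic `p` and `n ≥ 2`, with `𝕜 ≠ 𝔽₂` if `n = 2`.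
If `X` is an `𝔽_p[SL_n(𝕜)]`-submodule of the module `M₀(𝕜)` of trace-zero `n × n` matrices
(with `SL_n(𝕜)` acting by conjugation), then either `X` consists of scalar matrices
(i.e. `X ⊆ 𝕊`), or `X` is all of `M₀(𝕜)`.  Consequently `M₀(𝕜)/𝕊` is a simple
`𝔽_p[SL_n(𝕜)]`-module, and when `p ∣ n` the submodule `𝕊` of scalar matrices has no
`SL_n(𝕜)`-stable complement in `M₀(𝕜)`, i.e. `0 → 𝕊 → M₀(𝕜) → M₀(𝕜)/𝕊 → 0` does not split. -/
theorem submodule_of_trace_zero_matrices_scalar_or_top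
    (hn : 2 ≤ n) (h2 : n = 2 → Fintype.card 𝕜 ≠ 2)
    (X : Submodule (ZMod p) (Matrix (Fin n) (Fin n) 𝕜))
    (hXtr : ∀ A ∈ X, Matrix.trace A = 0)
    (hXconj : ∀ (g : Matrix.SpecialLinearGroup (Fin n) 𝕜), ∀ A ∈ X,
      (g : Matrix (Fin n) (Fin n) 𝕜) * A * ((g⁻¹ : Matrix.SpecialLinearGroup (Fin n) 𝕜) :
        Matrix (Fin n) (Fin n) 𝕜) ∈ X) :
    ((∀ A ∈ X, ∃ c : 𝕜, A = c • (1 : Matrix (Fin n) (Fin n) 𝕜)) ∨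
      (∀ A : Matrix (Fin n) (Fin n) 𝕜, Matrix.trace A = 0 → A ∈ X)) ∧
    (p ∣ n →
      ¬ ∃ C : Submodule (ZMod p) (Matrix (Fin n) (Fin n) 𝕜),
        (∀ A ∈ C, Matrix.trace A = 0) ∧
        (∀ (g : Matrix.SpecialLinearGroup (Fin n) 𝕜), ∀ A ∈ C,
          (g : Matrix (Fin n) (Fin n) 𝕜) * A * ((g⁻¹ : Matrix.SpecialLinearGroup (Fin n) 𝕜) :
            Matrix (Fin n) (Fin n) 𝕜) ∈ C) ∧
        (∀ A ∈ C, (∃ c : 𝕜, A = c • (1 : Matrix (Fin n) (Fin n) 𝕜)) → A = 0) ∧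
        (∀ A : Matrix (Fin n) (Fin n) 𝕜, Matrix.trace A = 0 →
          ∃ B ∈ C, ∃ c : 𝕜, A = B + c • (1 : Matrix (Fin n) (Fin n) 𝕜))) := by
  have hk : ∀ i j : Fin n, i ≠ j → (∃ k, k ≠ i ∧ k ≠ j) ∨ ∃ u : 𝕜, u ≠ 0 ∧ u ≠ 1 := by
    intro i j _
    rcases hn.eq_or_lt with hn2 | hn3
    · right
      by_contra hcon
      push Not at hcon
      apply h2 hn2.symm
      classical
      have huniv : (Finset.univ : Finset 𝕜) = {0, 1} := by
        ext u
        by_cases hu : u = 0 <;> simp [hu, hcon]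
      rw [← Finset.card_univ, huniv, Finset.card_pair zero_ne_one]
    · left
      have hlt : ({i, j} : Finset (Fin n)).card < (Finset.univ : Finset (Fin n)).card :=
        lt_of_le_of_lt Finset.card_le_two (by simpa using hn3)
      obtain ⟨k, _, hkn⟩ := Finset.exists_mem_notMem_of_card_lt_card hlt
      exact ⟨k, by simpa using hkn⟩
  have : Nonempty (Fin n) := ⟨⟨0, by omega⟩⟩
  have key : ∀ Y : Submodule (ZMod p) (Matrix (Fin n) (Fin n) 𝕜), (∀ A ∈ Y, Matrix.trace A = 0) →
      (∀ (g : Matrix.SpecialLinearGroup (Fin n) 𝕜), ∀ A ∈ Y,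
        (g : Matrix (Fin n) (Fin n) 𝕜) * A * ((g⁻¹ : Matrix.SpecialLinearGroup (Fin n) 𝕜) :
          Matrix (Fin n) (Fin n) 𝕜) ∈ Y) →
      (∀ A ∈ Y, ∃ c : 𝕜, A = c • (1 : Matrix (Fin n) (Fin n) 𝕜)) ∨
      (∀ A : Matrix (Fin n) (Fin n) 𝕜, Matrix.trace A = 0 → A ∈ Y) := by
    intro Y htr hconj
    exact TransvStable.scalar_or_top (X := Y.toAddSubgroup) (TransvStable.of_conj hconj) hk htr
  refine ⟨key X hXtr hXconj, ?_⟩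
  rintro hpn ⟨C, hCtr, hCconj, hCS, hCtop⟩
  rcases key C hCtr hCconj with hsc | htop
  -- If `C` is scalar then `C = 0`, so every trace-zero matrix is scalar, but `E_01` is not.
  · have h01 : (⟨0, by omega⟩ : Fin n) ≠ ⟨1, by omega⟩ := by simp
    obtain ⟨B, hB, c, hBc⟩ := hCtop (Matrix.single ⟨0, by omega⟩ ⟨1, by omega⟩ 1)
      (Matrix.trace_single_eq_of_ne _ _ _ h01)
    rw [hCS B hB (hsc B hB), zero_add] at hBc
    have := congrFun (congrFun hBc ⟨0, by omega⟩) ⟨1, by omega⟩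
    simp at this
  · have h1 : (1 : Matrix (Fin n) (Fin n) 𝕜) ∈ C := by
      apply htop
      rw [Matrix.trace_one, Fintype.card_fin]
      exact (CharP.cast_eq_zero_iff 𝕜 p n).mpr hpn
    exact one_ne_zero (hCS 1 h1 ⟨1, (one_smul _ _).symm⟩)

end
end

section
/- Let 𝕜 be a finite field of characteristic p and cardinality p^d, and let n ≥ 2. Set h := gcd(n, p^d − 1). Then the group cohomology H^i(SL_n(𝕜), F_p) with trivial coefficients vanishes for all i with 0 < i < d(p−1)/h. -/
/-!
Write `q = p ^ d` for the cardinality of `𝕜`. Two standard reductions bring the problem down to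
groups of affine type.

* *Transfer.* If a subgroup `S` has index prime to `p` and `Hⁱ(S) = 0`, then `Hⁱ(G) = 0`
  (`van_of_index`). It is applied to the stabilizer `P` of the line spanned by the first basis
  vector: `SL_n` and `GL_n` act transitively on the `q ^ n - 1` nonzero vectors.
* *Extensions.* `P` consists of block matrices with rows `(s, v)` and `(0, A)`. Let `E` be the
  normal subgroup where `A` is scalar; then `P / E` is the image of `GL_{n-1}`, by a map whose
  kernel (the scalars) has order prime to `p`. If `E` has no cohomology in degrees `1, …, i`, and
  neither has `GL_{n-1}` in degree `i`, then `Hⁱ(P) = 0` (`van_extension`; a dimension-shifting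
  replacement for the Hochschild-Serre spectral sequence).

By induction on the size of the matrices the theorem follows for `GL` and then for `SL`, provided
the low-degree cohomology of `E` vanishes (`van_step`).

The group `E` acts on `𝕜 ^ (n-1)` by maps `y ↦ α(g) y + v(g)`, transitively and with stabilizers of
order prime to `p`. After a choice of linear isomorphism between `𝕜 ^ (n-1)` and a field extension
`K` of `𝕜`, it acts on `K` by affine maps. Polynomials over `K` of degree less than `|K|` are the
functions on `K`, so form an induced module, with no cohomology in positive degrees even after a
twist by a power of the character `α`. If `V(s, r)` denotes the polynomials of degree less than
`p ^ r` with the `p ^ s`-Frobenius twist of this action, and `(w)` a twist by `α ^ w`, the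
derivative yields exact sequences

  `0 → V(s+1, r)(w) → V(s, r+1)(w) → Z → 0` and
  `0 → Z → V(s, r+1)(w + p ^ s) → V(s+1, r)(w + p ^ (s+1)) → 0`,

whose first map is `f ↦ f(X ^ p)` and whose last one takes the coefficients of
`X ^ (j * p + p - 1)`. Descending from `V(0, D)` with `|K| = p ^ D` to the trivial module `V(D, 0)`
(`van_trunc`), every step of positive cohomological degree costs a power of `p` in the weight,
and in degree `0` a weight `w` kills the invariants as soon as `α(z) ^ w ≠ 1` for some `z` fixing
the origin. So `Hⁱ(E) = 0` unless `α(z) ^ N = 1` for a sum `N` of at least one and at most `i`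
powers of `p` (`van_affine`).

For `GL` the element `z` can be chosen with `α(z)` a generator `ζ` of the unit group of `𝕜`, for
`SL_n` with `α(z) = ζ ^ n`. Then `α(z) ^ N = 1` forces `q - 1 ∣ h * N`, where `h = 1` or
`h = gcd(n, q - 1)`. Such an `N` is a sum of at least `d * (p - 1) / h` powers of `p`
(`digit_bound`): sum over the `d` cyclic rotations of the exponents modulo `d`.
-/

/-! ### Vanishing of group cohomology and long exact sequences -/

open CategoryTheory

/-- `Hⁱ(G, V) = 0` for the representation `ρ` of `G` on `V`. -/
def Van {k G V : Type} [CommRing k] [Group G] [AddCommGroup V] [Module k V]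
    (ρ : Representation k G V) (i : ℕ) : Prop :=
  Subsingleton (groupCohomology (Rep.of ρ) i)

section LES
variable {k G A B C : Type} [CommRing k] [Group G] [AddCommGroup A] [Module k A]
  [AddCommGroup B] [Module k B] [AddCommGroup C] [Module k C]
  {ρA : Representation k G A} {ρB : Representation k G B} {ρC : Representation k G C}

lemma van_iff_isZero {i : ℕ} : Van ρA i ↔ Limits.IsZero (groupCohomology (Rep.of ρA) i) :=
  ⟨fun h => by
    have : Subsingleton (groupCohomology (Rep.of ρA) i) := h
    exact ModuleCat.isZero_of_subsingleton _, fun h => ModuleCat.subsingleton_of_isZero h⟩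

/-- A short exact sequence of representations, given by equivariant linear maps, as a short exact
sequence in `Rep k G`. -/
lemma exists_shortExact (f : A →ₗ[k] B) (g : B →ₗ[k] C)
    (hf : ∀ x a, f (ρA x a) = ρB x (f a)) (hg : ∀ x b, g (ρB x b) = ρC x (g b))
    (inj : Function.Injective f) (ex : ∀ b, g b = 0 ↔ ∃ a, f a = b)
    (surj : Function.Surjective g) :
    ∃ (F : Rep.of ρA ⟶ Rep.of ρB) (K : Rep.of ρB ⟶ Rep.of ρC) (w : F ≫ K = 0),
      (ShortComplex.mk F K w).ShortExact := by
  refine ⟨Rep.ofHom ⟨f, fun x => LinearMap.ext (hf x)⟩,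
    Rep.ofHom ⟨g, fun x => LinearMap.ext (hg x)⟩, ?_, ?_⟩
  · ext a
    exact (ex _).2 ⟨a, rfl⟩
  · have hex : ∀ (S : ShortComplex (Rep k G)),
        (∀ b : S.X₂, S.g.hom b = 0 → ∃ a, S.f.hom a = b) → S.Exact := by
      intro S hS
      rw [← ShortComplex.exact_map_iff_of_faithful S (forget₂ (Rep k G) (ModuleCat k)),
        ShortComplex.moduleCat_exact_iff]
      exact hS
    exact ShortComplex.ShortExact.mk' (hex _ fun b hb => (ex b).1 hb)
      ((Rep.mono_iff_injective _).2 inj) ((Rep.epi_iff_surjective _).2 surj)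

/-- For `0 → A → B → C → 0` exact, `Hⁱ⁺¹(A)` sits between `Hⁱ(C)` and `Hⁱ⁺¹(B)`. -/
lemma van_left (f : A →ₗ[k] B) (g : B →ₗ[k] C)
    (hf : ∀ x a, f (ρA x a) = ρB x (f a)) (hg : ∀ x b, g (ρB x b) = ρC x (g b))
    (inj : Function.Injective f) (ex : ∀ b, g b = 0 ↔ ∃ a, f a = b)
    (surj : Function.Surjective g) {i : ℕ} (h2 : Van ρB (i + 1)) (h3 : Van ρC i) :
    Van ρA (i + 1) := by
  obtain ⟨F, K, w, h⟩ := exists_shortExact f g hf hg inj ex surj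
  rw [van_iff_isZero] at *
  exact (groupCohomology.mapShortComplex₁_exact h (i := i) rfl).isZero_of_both_zeros
    (h3.eq_of_src _ _) (h2.eq_of_tgt _ _)

/-- For `0 → A → B → C → 0` exact, `Hⁱ(C)` sits between `Hⁱ(B)` and `Hⁱ⁺¹(A)`. -/
lemma van_right (f : A →ₗ[k] B) (g : B →ₗ[k] C)
    (hf : ∀ x a, f (ρA x a) = ρB x (f a)) (hg : ∀ x b, g (ρB x b) = ρC x (g b))
    (inj : Function.Injective f) (ex : ∀ b, g b = 0 ↔ ∃ a, f a = b)
    (surj : Function.Surjective g) {i : ℕ} (h2 : Van ρB i) (h3 : Van ρA (i + 1)) :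
    Van ρC i := by
  obtain ⟨F, K, w, h⟩ := exists_shortExact f g hf hg inj ex surj
  rw [van_iff_isZero] at *
  exact (groupCohomology.mapShortComplex₃_exact h (i := i) rfl).isZero_of_both_zeros
    (h2.eq_of_src _ _) (h3.eq_of_tgt _ _)

/-- Vanishing of cohomology passes to equivariant retracts. -/
lemma van_retract (f : A →ₗ[k] B) (g : B →ₗ[k] A)
    (hf : ∀ x a, f (ρA x a) = ρB x (f a)) (hg : ∀ x b, g (ρB x b) = ρA x (g b))
    (hgf : ∀ a, g (f a) = a) {i : ℕ} (h : Van ρB i) : Van ρA i := by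
  let F : Rep.of ρA ⟶ Rep.of ρB := Rep.ofHom ⟨f, fun x => LinearMap.ext (hf x)⟩
  let K : Rep.of ρB ⟶ Rep.of ρA := Rep.ofHom ⟨g, fun x => LinearMap.ext (hg x)⟩
  have hFK : F ≫ K = 𝟙 _ := by ext a; exact hgf a
  rw [van_iff_isZero] at *
  rw [Limits.IsZero.iff_id_eq_zero]
  have : 𝟙 (groupCohomology (Rep.of ρA) i) = (groupCohomology.functor k G i).map F ≫
      (groupCohomology.functor k G i).map K := by
    rw [← Functor.map_comp, hFK]; exact ((groupCohomology.functor k G i).map_id _).symm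
  rw [this]
  have h0 : (groupCohomology.functor k G i).map F = 0 := Limits.IsZero.eq_of_tgt h _ _
  rw [h0, Limits.zero_comp]
  rfl
end LES

lemma van_zero_iff {k G A : Type} [CommRing k] [Group G] [AddCommGroup A] [Module k A]
    {ρ : Representation k G A} : Van ρ 0 ↔ ∀ a, (∀ g, ρ g a = a) → a = 0 := by
  have e := (groupCohomology.H0Iso (Rep.of ρ)).toLinearEquiv.toEquiv.subsingleton_congr
  refine Iff.trans e ⟨fun h a ha => ?_, fun h => ⟨fun a b => ?_⟩⟩
  · have : (⟨a, ha⟩ : ρ.invariants) = 0 := h.elim _ _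
    exact congrArg Subtype.val this
  · exact Subtype.ext ((h a.1 a.2).trans (h b.1 b.2).symm)

lemma van_one_iff {k G A : Type} [CommRing k] [Group G] [AddCommGroup A] [Module k A]
    {ρ : Representation k G A} : Van ρ 1 ↔ ∀ c : G → A, (∀ g h, c (g * h) = ρ g (c h) + c g) →
      ∃ a, ∀ g, c g = ρ g a - a := by
  constructor
  · intro h c hc
    have h' : Subsingleton (groupCohomology.H1 (Rep.of ρ)) := h
    have hm : c ∈ groupCohomology.cocycles₁ (Rep.of ρ) := (groupCohomology.mem_cocycles₁_iff _).2 hc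
    have := (groupCohomology.H1π_eq_zero_iff (A := Rep.of ρ) ⟨c, hm⟩).1 (h'.elim _ _)
    obtain ⟨a, ha⟩ := this
    exact ⟨a, fun g => (congrFun ha g).symm⟩
  · intro h
    refine ⟨fun x y => ?_⟩
    suffices ∀ x : groupCohomology.H1 (Rep.of ρ), x = 0 from (this x).trans (this y).symm
    intro x
    induction x using groupCohomology.H1_induction_on with | _ x
    rw [groupCohomology.H1π_eq_zero_iff]
    obtain ⟨a, ha⟩ := h x ((groupCohomology.mem_cocycles₁_iff _).1 x.2)
    exact ⟨a, funext fun g => (ha g).symm⟩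

/-! ### Transfer and extensions of groups -/

section Transfer
variable {k G A : Type} [CommRing k] [Group G] [AddCommGroup A] [Module k A]

/-- Transfer: `A` is a retract of the module coinduced from its restriction to `S`, the retraction
being the sum over `G ⧸ S` divided by the index; Shapiro's lemma applies to the coinduced
module. -/
lemma van_of_index [Finite G] (ρ : Representation k G A) (S : Subgroup G)
    (hS : IsUnit (S.index : k)) {i : ℕ} (h : Van (ρ.comp S.subtype) i) : Van ρ i := by
  classical
  have := Fintype.ofFinite (G ⧸ S)
  obtain ⟨u, hu⟩ := hS
  have hc : Van (Representation.coind S.subtype (ρ.comp S.subtype)) i := by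
    rw [van_iff_isZero] at *
    exact h.of_iso (groupCohomology.coindIso (Rep.of (ρ.comp S.subtype)) i)
  let T : Representation.coindV S.subtype (ρ.comp S.subtype) → G ⧸ S → A := fun F =>
    Quotient.lift (fun x : G => ρ x (F.1 x⁻¹)) (by
      intro a b hab
      have hab' : a⁻¹ * b ∈ S := QuotientGroup.leftRel_apply.1 hab
      have h1 := F.2 ⟨a⁻¹ * b, hab'⟩ b⁻¹
      simp only [Subgroup.coe_subtype, mul_assoc, mul_inv_cancel, mul_one, MonoidHom.comp_apply]
        at h1
      rw [h1, ← Module.End.mul_apply, ← map_mul]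
      simp)
  refine van_retract (ρB := Representation.coind S.subtype (ρ.comp S.subtype))
    { toFun := fun a => ⟨fun x => ρ x a, fun g x => by simp⟩
      map_add' := fun a b => by ext; simp
      map_smul' := fun c b => by ext; simp }
    { toFun := fun F => (↑u⁻¹ : k) • ∑ x : G ⧸ S, T F x
      map_add' := fun F F' => by
        rw [← smul_add, ← Finset.sum_add_distrib]
        congr 1
        refine Finset.sum_congr rfl fun x _ => ?_
        induction x using Quotient.inductionOn
        simp [T]
      map_smul' := fun c F => by
        simp only [RingHom.id_apply]
        rw [smul_comm c]
        congr 1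
        rw [Finset.smul_sum]
        refine Finset.sum_congr rfl fun x _ => ?_
        induction x using Quotient.inductionOn
        simp [T] } ?_ ?_ ?_ hc
  · intro x a
    ext y
    change ρ y (ρ x a) = ρ (y * x) a
    simp
  · intro g F
    simp only [LinearMap.coe_mk, AddHom.coe_mk, map_smul, map_sum]
    congr 1
    rw [← Equiv.sum_comp (MulAction.toPerm g)]
    refine Finset.sum_congr rfl fun x _ => ?_
    induction x using Quotient.inductionOn with | _ x
    change ρ (g * x) (F.1 ((g * x)⁻¹ * g)) = ρ g (ρ x (F.1 x⁻¹))
    simp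
  · intro a
    simp only [LinearMap.coe_mk, AddHom.coe_mk]
    have : ∀ x : G ⧸ S, T ⟨fun x => ρ x a, fun g x => by simp⟩ x = a := by
      intro x
      induction x using Quotient.inductionOn with | _ x
      change ρ x (ρ x⁻¹ a) = a
      simp
    simp only [this, Finset.sum_const, Finset.card_univ]
    rw [← Nat.cast_smul_eq_nsmul k, ← Nat.card_eq_fintype_card, ← Subgroup.index, ← hu, smul_smul]
    simp

/-- If the identity is the trace of some linear endomorphism `φ`, the module is a retract of one
coinduced from the trivial group, hence has no cohomology in positive degrees. -/
lemma van_of_trace [Fintype G] (ρ : Representation k G A) (φ : A →ₗ[k] A)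
    (h : ∀ a, ∑ g, ρ g (φ (ρ g⁻¹ a)) = a) (i : ℕ) : Van ρ (i + 1) := by
  have hc : Van (Representation.coind (⊥ : Subgroup G).subtype
      (ρ.comp (⊥ : Subgroup G).subtype)) (i + 1) := by
    rw [van_iff_isZero]
    exact (isZero_groupCohomology_succ_of_subsingleton _ i).of_iso
      (groupCohomology.coindIso (Rep.of (ρ.comp (⊥ : Subgroup G).subtype)) _)
  refine van_retract (ρB := Representation.coind (⊥ : Subgroup G).subtype
      (ρ.comp (⊥ : Subgroup G).subtype))
    { toFun := fun a => ⟨fun x => φ (ρ x a), fun g x => by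
        have : g = 1 := Subsingleton.elim _ _
        subst this; simp⟩
      map_add' := fun a b => by ext; simp
      map_smul' := fun c b => by ext; simp }
    { toFun := fun F => ∑ x, ρ x (F.1 x⁻¹)
      map_add' := fun F F' => by simp [Finset.sum_add_distrib]
      map_smul' := fun c F => by simp [Finset.smul_sum] } ?_ ?_ ?_ hc
  · intro x a
    ext y
    change φ (ρ y (ρ x a)) = φ (ρ (y * x) a)
    simp
  · intro g F
    simp only [LinearMap.coe_mk, AddHom.coe_mk, map_sum]
    rw [← Equiv.sum_comp (Equiv.mulLeft g)]
    refine Finset.sum_congr rfl fun x _ => ?_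
    change ρ (g * x) (F.1 ((g * x)⁻¹ * g)) = ρ g (ρ x (F.1 x⁻¹))
    simp
  · intro a
    exact h a

end Transfer

section Extension
variable {k G Q A : Type} [CommRing k] [Group G] [Group Q] [AddCommGroup A] [Module k A]

/-- The functions `G → A` with the action of `G` by right translation of the argument; this is the
module coinduced from the trivial group. -/
def transRep (k G A : Type) [CommRing k] [Group G] [AddCommGroup A] [Module k A] :
    Representation k G (G → A) where
  toFun g := LinearMap.funLeft k A (· * g)
  map_one' := by ext; simp
  map_mul' _ _ := by ext; simp [mul_assoc]

lemma transRep_apply (g x : G) (F : G → A) : transRep k G A g F x = F (x * g) := rfl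

/-- The equivariant embedding of `A` into the coinduced module `G → A`, sending `a` to the function
`x ↦ ρ x a`. -/
def orbitMap (ρ : Representation k G A) : A →ₗ[k] (G → A) where
  toFun a x := ρ x a
  map_add' _ _ := by ext; simp
  map_smul' _ _ := by ext; simp

lemma orbitMap_equivariant (ρ : Representation k G A) (g : G) (a : A) :
    orbitMap ρ (ρ g a) = transRep k G A g (orbitMap ρ a) := by
  ext x; simp [orbitMap, transRep_apply]

/-- The dimension shift of `ρ`: the cokernel of `orbitMap ρ`. -/
def shiftRep (ρ : Representation k G A) :
    Representation k G ((G → A) ⧸ LinearMap.range (orbitMap ρ)) where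
  toFun g := Submodule.mapQ _ _ (transRep k G A g) (by
    rintro _ ⟨a, rfl⟩
    exact ⟨ρ g a, orbitMap_equivariant ρ g a⟩)
  map_one' := by ext; simp
  map_mul' _ _ := by ext; simp

/-- The action of `Q` through `f : Q →* G` on the vectors invariant under the normal subgroup
`E`. -/
noncomputable def invRep (ρ : Representation k G A) (E : Subgroup G) [hE : E.Normal] (f : Q →* G) :
    Representation k Q (Representation.invariants (ρ.comp E.subtype)) where
  toFun q := (ρ (f q)).restrict (by
    intro a ha e
    have h1 := ha ⟨(f q)⁻¹ * e * f q, by simpa using hE.conj_mem e e.2 (f q)⁻¹⟩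
    simp only [MonoidHom.comp_apply, Subgroup.subtype_apply] at h1 ⊢
    conv_rhs => rw [← h1]
    rw [← Module.End.mul_apply, ← Module.End.mul_apply, ← map_mul, ← map_mul]
    simp [mul_assoc])
  map_one' := by ext; simp
  map_mul' _ _ := by ext; simp; rfl

lemma invRep_coe (ρ : Representation k G A) (E : Subgroup G) [hE : E.Normal] (f : Q →* G)
    (q : Q) (a) : (invRep ρ E f q a : A) = ρ (f q) a := rfl

lemma van_transRep [Finite G] (i : ℕ) : Van (transRep k G A) (i + 1) := by
  classical
  have := Fintype.ofFinite G
  refine van_of_trace _ (LinearMap.pi fun x => if x = 1 then LinearMap.proj x else 0) ?_ i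
  intro F
  ext x
  rw [Finset.sum_apply, Finset.sum_eq_single x⁻¹]
  · simp [transRep_apply]
  · intro g _ hg
    have : x * g ≠ 1 := fun h => hg (eq_inv_of_mul_eq_one_right h)
    simp [transRep_apply, this]
  · simp

/-- The coinduced module remains acyclic on restriction to a subgroup: project a function to its
values on a system of coset representatives. -/
lemma van_transRep_res [Finite G] (E : Subgroup G) (i : ℕ) :
    Van ((transRep k G A).comp E.subtype) (i + 1) := by
  classical
  have := Fintype.ofFinite E
  refine van_of_trace _ (LinearMap.pi fun x : G =>
    if x = Quotient.out (x : G ⧸ E) then LinearMap.proj x else 0 : (G → A) →ₗ[k] (G → A)) ?_ i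
  intro F
  ext x
  have hx : x⁻¹ * Quotient.out (x : G ⧸ E) ∈ E :=
    QuotientGroup.eq.1 (Quotient.out_eq (x : G ⧸ E)).symm
  rw [Finset.sum_apply, Finset.sum_eq_single ⟨_, hx⟩]
  · simp [transRep_apply]
  · intro g _ hg
    have : x * g ≠ Quotient.out (x : G ⧸ E) := by
      intro h
      apply hg
      ext
      exact eq_inv_mul_of_mul_eq h
    simp [transRep_apply, this]
  · simp

/-- The `E`-invariants of the coinduced module are the functions on `G ⧸ E`; they are acyclic for
`Q`, which acts transitively on `G ⧸ E` with stabilizer `E.comap f` of invertible order. -/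
lemma van_transRep_inv [Finite Q] (E : Subgroup G) [hE : E.Normal] (f : Q →* G)
    (hf : ∀ g, ∃ q, ∃ e ∈ E, g = f q * e) (hc : IsUnit (Nat.card (E.comap f) : k)) (i : ℕ) :
    Van (invRep (transRep k G A) E f) (i + 1) := by
  classical
  have := Fintype.ofFinite Q
  obtain ⟨u, hu⟩ := hc
  have hinv : ∀ F : Representation.invariants ((transRep k G A).comp E.subtype),
      ∀ x : G, ∀ e ∈ E, F.1 (x * e) = F.1 x := by
    intro F x e he
    exact congrFun (F.2 ⟨e, he⟩) x
  let φ : (G → A) →ₗ[k] (G → A) :=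
    LinearMap.pi fun x => if x ∈ E then (↑u⁻¹ : k) • LinearMap.proj x else 0
  have hφ : ∀ F x, φ F x = if x ∈ E then (↑u⁻¹ : k) • F x else 0 := by
    intro F x
    by_cases h : x ∈ E <;> simp [φ, h]
  have hres : ∀ F ∈ Representation.invariants ((transRep k G A).comp E.subtype),
      φ F ∈ Representation.invariants ((transRep k G A).comp E.subtype) := by
    intro F hF e
    ext x
    have hx : x * e ∈ E ↔ x ∈ E := E.mul_mem_cancel_right e.2
    have := hinv ⟨F, hF⟩ x e e.2
    by_cases h : x ∈ E
    · simpa [transRep_apply, hφ, hx, h] using congrArg _ this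
    · simp [transRep_apply, hφ, hx, h]
  refine van_of_trace _ (φ.restrict hres) ?_ i
  · intro F
    ext x
    have h1 : ∀ q : Q, ((invRep (transRep k G A) E f q (φ.restrict hres
          (invRep (transRep k G A) E f q⁻¹ F))).1 : G → A) x
          = if x * f q ∈ E then (↑u⁻¹ : k) • F.1 x else 0 := by
      intro q
      rw [invRep_coe, transRep_apply, LinearMap.coe_restrict_apply, hφ, invRep_coe,
        transRep_apply]
      simp
    rw [AddSubmonoidClass.coe_finsetSum, Finset.sum_apply]
    simp only [h1]
    rw [← Finset.sum_filter, Finset.sum_const, ← Nat.cast_smul_eq_nsmul k, smul_smul]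
    have h2 : ((Finset.univ.filter fun q => x * f q ∈ E).card : k) = u := by
      rw [hu, ← Fintype.card_subtype, ← Nat.card_eq_fintype_card]
      obtain ⟨q0, e0, he0, rfl⟩ := hf x
      congr 1
      refine Nat.card_congr ((Equiv.mulLeft q0).subtypeEquiv fun q => ?_)
      have : f q0 * e0 * f q = f (q0 * q) * ((f q)⁻¹ * e0 * f q) := by
        rw [map_mul]; group
      rw [this, E.mul_mem_cancel_right (by simpa using hE.conj_mem e0 he0 (f q)⁻¹)]
      rfl
    rw [h2]
    simp

/-- Let `G = f(Q) E` with `E` normal and `E.comap f` of invertible order. If `Hᵇ(E, A) = 0` for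
`1 ≤ b ≤ i + 1` and `Hⁱ⁺¹(Q, A^E) = 0`, then `Hⁱ⁺¹(G, A) = 0`. Degree one is a cocycle computation
(inflation-restriction); higher degrees follow by dimension shift, where `H¹(E, A) = 0` ensures
that taking `E`-invariants of the shifting sequence preserves exactness. -/
theorem van_extension [Finite G] [Finite Q] (E : Subgroup G) [hE : E.Normal] (f : Q →* G)
    (hf : ∀ g, ∃ q, ∃ e ∈ E, g = f q * e) (hc : IsUnit (Nat.card (E.comap f) : k)) (i : ℕ) :
    ∀ {A : Type} [AddCommGroup A] [Module k A] (ρ : Representation k G A),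
      (∀ b ≤ i, Van (ρ.comp E.subtype) (b + 1)) → Van (invRep ρ E f) (i + 1) →
      Van ρ (i + 1) := by
  induction i with
  | zero =>
    intro A _ _ ρ h1 h2
    have h1 := h1 0 le_rfl
    rw [zero_add, van_one_iff] at *
    intro c hc
    obtain ⟨a, ha⟩ := h1 (fun e => c e) (fun g h => hc g h)
    let c' : G → A := fun g => c g - (ρ g a - a)
    have hc' : ∀ g h, c' (g * h) = ρ g (c' h) + c' g := by
      intro g h
      simp only [c', hc g h, map_mul, Module.End.mul_apply, map_sub]
      abel
    have hE0 : ∀ e ∈ E, c' e = 0 := by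
      intro e he
      have := ha ⟨e, he⟩
      simp only [MonoidHom.comp_apply, Subgroup.subtype_apply] at this
      simp [c', this]
    have hmem : ∀ g, c' g ∈ Representation.invariants (ρ.comp E.subtype) := by
      intro g e
      have e1 := hc' e g
      have e2 := hc' g (g⁻¹ * e * g)
      rw [hE0 _ e.2] at e1
      rw [hE0 (g⁻¹ * e * g) (by simpa using hE.conj_mem e e.2 g⁻¹)] at e2
      have : (e : G) * g = g * (g⁻¹ * e * g) := by group
      rw [this, e2] at e1
      simpa using e1.symm
    obtain ⟨m, hm⟩ := h2 (fun q => ⟨c' (f q), hmem _⟩) (by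
      intro g h
      ext
      simpa [invRep_coe] using hc' (f g) (f h))
    refine ⟨a + m.1, fun g => ?_⟩
    obtain ⟨q, e, he, rfl⟩ := hf g
    have e1 := hc' (f q) e
    rw [hE0 e he] at e1
    have e2 := congrArg Subtype.val (hm q)
    have e3 : ρ e m.1 = m.1 := m.2 ⟨e, he⟩
    simp only [AddSubgroupClass.coe_sub, invRep_coe] at e2
    rw [e2] at e1
    have e4 : c (f q * e) = c' (f q * e) + (ρ (f q * e) a - a) := by simp [c']
    rw [e4, e1]
    simp only [map_mul, Module.End.mul_apply, map_add, e3, map_zero]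
    abel
  | succ i ih =>
    intro A _ _ ρ h1 h2
    have hinj : Function.Injective (orbitMap ρ) := by
      intro a b h
      simpa [orbitMap] using congrFun h 1
    have hex : ∀ F, (LinearMap.range (orbitMap ρ)).mkQ F = 0 ↔ ∃ a, orbitMap ρ a = F := by
      intro F; simp
    have hsurj := (LinearMap.range (orbitMap ρ)).mkQ_surjective
    have hmk : ∀ g F, (LinearMap.range (orbitMap ρ)).mkQ (transRep k G A g F) =
      shiftRep ρ g ((LinearMap.range (orbitMap ρ)).mkQ F) := fun g F => rfl
    have hsh : Van (shiftRep ρ) (i + 1) := by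
      refine ih (shiftRep ρ) (fun b hb => ?_) ?_
      · exact van_right (ρA := ρ.comp E.subtype) (ρB := (transRep k G A).comp E.subtype)
          (ρC := (shiftRep ρ).comp E.subtype)
          (orbitMap ρ) (LinearMap.range (orbitMap ρ)).mkQ
          (fun x a => orbitMap_equivariant ρ x a) (fun x F => hmk x F) hinj hex hsurj
          (van_transRep_res E b) (h1 (b + 1) (by omega))
      · refine van_right (ρA := invRep ρ E f) (ρB := invRep (transRep k G A) E f)
          ((orbitMap ρ).restrict ?_) ((LinearMap.range (orbitMap ρ)).mkQ.restrict ?_)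
          ?_ ?_ ?_ ?_ ?_ (van_transRep_inv E f hf hc i) h2
        · intro a ha e
          have := ha e
          simp only [MonoidHom.comp_apply, Subgroup.subtype_apply] at this ⊢
          rw [← orbitMap_equivariant, this]
        · intro F hF e
          have := hF e
          simp only [MonoidHom.comp_apply, Subgroup.subtype_apply] at this ⊢
          rw [← hmk, this]
        · intro q a
          ext1
          exact orbitMap_equivariant ρ _ _
        · intro q F
          ext1
          exact hmk _ _
        · intro a b h
          exact Subtype.ext (hinj (congrArg Subtype.val h))
        · intro F
          constructor
          · intro h
            obtain ⟨a, ha⟩ := (hex _).1 (congrArg Subtype.val h)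
            refine ⟨⟨a, fun e => hinj ?_⟩, Subtype.ext ha⟩
            have := F.2 e
            have ha' : orbitMap ρ a = F.1 := ha
            rw [← ha'] at this
            exact (orbitMap_equivariant ρ _ _).trans this
          · rintro ⟨a, rfl⟩
            exact Subtype.ext ((hex _).2 ⟨a.1, rfl⟩)
        · intro y
          obtain ⟨F, hF⟩ := hsurj y.1
          have : ∀ e : E, ∃ a, orbitMap ρ a = transRep k G A e F - F := by
            intro e
            rw [← hex, map_sub, hmk, hF]
            exact sub_eq_zero.2 (y.2 e)
          choose c hc using this
          have hv := van_one_iff.1 (h1 0 (Nat.zero_le _)) c (by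
            intro g h
            apply hinj
            have e1 := orbitMap_equivariant ρ g (c h)
            simp only [map_add, MonoidHom.comp_apply, Subgroup.subtype_apply, e1, hc, map_sub]
            simp)
          obtain ⟨a, ha⟩ := hv
          refine ⟨⟨F - orbitMap ρ a, fun e => ?_⟩, ?_⟩
          · have e1 := hc e
            rw [ha] at e1
            have e2 := orbitMap_equivariant ρ e a
            simp only [map_sub, MonoidHom.comp_apply, Subgroup.subtype_apply, e2] at e1 ⊢
            rw [sub_eq_sub_iff_sub_eq_sub, ← e1]
          · ext1
            change (LinearMap.range (orbitMap ρ)).mkQ (F - orbitMap ρ a) = y.1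
            rw [map_sub, hF, (hex _).2 ⟨a, rfl⟩, sub_zero]
    exact van_left (orbitMap ρ) (LinearMap.range (orbitMap ρ)).mkQ
          (fun x a => orbitMap_equivariant ρ x a) (fun x F => hmk x F) hinj hex hsurj
          (van_transRep (i + 1)) hsh
end Extension

/-! ### Polynomials under affine substitutions -/

section Affine
set_option linter.unusedSectionVars false
open Polynomial

variable {K G : Type} [Field K] [Group G] (p : ℕ) [hp : Fact p.Prime] [CharP K p]
  (a : G →* K) (b : G → K)

/-- The linear polynomial `a(g) ^ (p ^ s) X + b(g) ^ (p ^ s)`: the `p ^ s`-Frobenius twist of the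
affine map `y ↦ a(g) y + b(g)`. -/
noncomputable def affSub (s : ℕ) (g : G) : K[X] := C (a g ^ p ^ s) * X + C (b g ^ p ^ s)

lemma b_one {a : G →* K} {b : G → K} (hb : ∀ g h, b (g * h) = a h * b g + b h) : b 1 = 0 := by
  simpa using hb 1 1

variable (hb : ∀ g h, b (g * h) = a h * b g + b h)

/-- The representation on `K[X]` by `f ↦ a(g) ^ w • f ∘ affSub g`. The relation `hb` says that
`g ↦ (y ↦ a(g) y + b(g))` is an antihomomorphism, so that precomposition is a left action. -/
noncomputable def affRep (s w : ℕ) : Representation K G K[X] where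
  toFun g := a g ^ w • (aeval (affSub p a b s g)).toLinearMap
  map_one' := by
    refine LinearMap.ext fun f => ?_
    have hp0 : p ^ s ≠ 0 := pow_ne_zero _ hp.out.ne_zero
    have : affSub p a b s 1 = X := by
      rw [affSub, map_one, b_one hb, zero_pow hp0]
      simp
    simp [this]
  map_mul' g h := by
    refine LinearMap.ext fun f => ?_
    have key : affSub p a b s (g * h) = (affSub p a b s h).comp (affSub p a b s g) := by
      simp only [affSub, hb, map_mul, mul_pow, add_pow_char_pow, add_comp, mul_comp, C_comp,
        X_comp, map_add]
      ring
    simp only [LinearMap.smul_apply, AlgHom.toLinearMap_apply, Module.End.mul_apply, map_mul,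
      mul_pow, map_smul, smul_smul, key]
    rw [← comp_eq_aeval, ← comp_eq_aeval, ← comp_eq_aeval, comp_assoc, mul_comm]

lemma affRep_apply (s w : ℕ) (g : G) (f : K[X]) :
    affRep p a b hb s w g f = a g ^ w • f.comp (affSub p a b s g) := by
  rw [comp_eq_aeval]; rfl

lemma affRep_expand (s w : ℕ) (g : G) (f : K[X]) :
    affRep p a b hb s w g (expand K p f) = expand K p (affRep p a b hb (s + 1) w g f) := by
  rw [affRep_apply, affRep_apply, map_smul, expand_eq_comp_X_pow, expand_eq_comp_X_pow,
    comp_assoc, comp_assoc]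
  congr 2
  simp only [affSub, X_pow_comp, add_pow_char, mul_pow, add_comp, mul_comp, C_comp, X_comp,
    ← C_pow, ← pow_mul, pow_succ]

lemma affRep_derivative (s w : ℕ) (g : G) (f : K[X]) :
    derivative (affRep p a b hb s w g f) = affRep p a b hb s (w + p ^ s) g (derivative f) := by
  rw [affRep_apply, affRep_apply, derivative_smul, derivative_comp]
  have : derivative (affSub p a b s g) = C (a g ^ p ^ s) := by
    rw [affSub, derivative_add, derivative_C, derivative_C_mul, derivative_X, mul_one, add_zero]
  rw [this, pow_add, ← smul_eq_C_mul, smul_smul]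

lemma affRep_iterate_derivative (s w : ℕ) (g : G) (f : K[X]) (n : ℕ) :
    derivative^[n] (affRep p a b hb s w g f) =
      affRep p a b hb s (w + n * p ^ s) g (derivative^[n] f) := by
  induction n with
  | zero => simp
  | succ n ih =>
    rw [Function.iterate_succ_apply', ih, affRep_derivative, Function.iterate_succ_apply',
      show w + (n + 1) * p ^ s = w + n * p ^ s + p ^ s by ring]

/-- Up to the factor `(p - 1)!`, the polynomial whose `j`-th coefficient is the coefficient of
`X ^ (j * p + p - 1)` in `f`; see `coeff_topDigit`. -/
noncomputable def topDigit : K[X] →ₗ[K] K[X] where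
  toFun f := contract p (derivative^[p - 1] f)
  map_add' f g := by
    ext n; simp [coeff_contract hp.out.ne_zero, iterate_map_add]
  map_smul' c f := by
    ext n; simp [coeff_contract hp.out.ne_zero, iterate_derivative_smul]

lemma descFactorial_cast (j : ℕ) :
    ((j * p + (p - 1)).descFactorial (p - 1) : K) = ((p - 1).factorial : K) := by
  rw [← Nat.descFactorial_self, Nat.descFactorial_eq_prod_range, Nat.descFactorial_eq_prod_range,
    Nat.cast_prod, Nat.cast_prod]
  refine Finset.prod_congr rfl fun i hi => ?_
  have : i < p - 1 := Finset.mem_range.1 hi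
  rw [Nat.add_sub_assoc this.le]
  simp

lemma factorial_ne_zero' : ((p - 1).factorial : K) ≠ 0 := by
  rw [Ne, CharP.cast_eq_zero_iff K p, hp.out.dvd_factorial]
  have := hp.out.pos
  omega

lemma coeff_topDigit (f : K[X]) (j : ℕ) :
    (topDigit p f).coeff j = ((p - 1).factorial : K) * f.coeff (j * p + (p - 1)) := by
  change (contract p (derivative^[p - 1] f)).coeff j = _
  rw [coeff_contract hp.out.ne_zero, coeff_iterate_derivative, nsmul_eq_mul, descFactorial_cast]

lemma expand_topDigit (f : K[X]) : expand K p (topDigit p f) = derivative^[p - 1] f := by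
  refine expand_contract p ?_ hp.out.ne_zero
  rw [← Function.iterate_succ_apply' (f := derivative)]
  ext n
  rw [coeff_iterate_derivative, nsmul_eq_mul]
  have h : p ∣ (n + (p - 1).succ).descFactorial (p - 1).succ := by
    have h1 : (p - 1).succ = p := by have := hp.out.pos; omega
    rw [h1]
    exact (Nat.dvd_factorial hp.out.pos le_rfl).trans (Nat.factorial_dvd_descFactorial _ _)
  rw [(CharP.cast_eq_zero_iff K p _).2 h]
  simp

lemma affRep_topDigit (s w : ℕ) (g : G) (f : K[X]) :
    topDigit p (affRep p a b hb s w g f) =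
      affRep p a b hb (s + 1) (w + (p - 1) * p ^ s) g (topDigit p f) := by
  apply expand_injective hp.out.pos
  rw [expand_topDigit, ← affRep_expand, expand_topDigit, affRep_iterate_derivative]

lemma mem_degreeLT_iff_coeff {n : ℕ} {f : K[X]} :
    f ∈ degreeLT K n ↔ ∀ m, n ≤ m → f.coeff m = 0 := by
  rw [mem_degreeLT, degree_lt_iff_coeff_zero]

lemma affRep_mem (s w : ℕ) (g : G) (n : ℕ) {f : K[X]} (hf : f ∈ degreeLT K n) :
    affRep p a b hb s w g f ∈ degreeLT K n := by
  rw [affRep_apply]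
  refine Submodule.smul_mem _ _ ?_
  by_cases h0 : f = 0
  · simp [h0]
  rw [mem_degreeLT, ← natDegree_lt_iff_degree_lt h0] at hf
  rw [mem_degreeLT]
  refine degree_le_natDegree.trans_lt (Nat.cast_lt.2 (lt_of_le_of_lt natDegree_comp_le ?_))
  have : (affSub p a b s g).natDegree ≤ 1 := natDegree_linear_le
  nlinarith

/-- The subrepresentation of polynomials of degree less than `n`. -/
noncomputable def truncSub (s w n : ℕ) : Subrepresentation (affRep p a b hb s w) where
  toSubmodule := degreeLT K n
  apply_mem_toSubmodule g _ hf := affRep_mem p a b hb s w g n hf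

/-- The subrepresentation of polynomials of degree less than `n` in which no exponent is congruent to
`-1` modulo `p`. For `n = p ^ (r + 1)` it is the image of the derivative. -/
noncomputable def noTopSub (s w n : ℕ) : Subrepresentation (affRep p a b hb s w) where
  toSubmodule := degreeLT K n ⊓ LinearMap.ker (topDigit p)
  apply_mem_toSubmodule g f hf := ⟨affRep_mem p a b hb s w g n hf.1, by
    change topDigit p _ = 0
    rw [affRep_topDigit, LinearMap.mem_ker.1 hf.2, map_zero]⟩

lemma expand_mem {r : ℕ} {f : K[X]} (hf : f ∈ degreeLT K (p ^ r)) :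
    expand K p f ∈ degreeLT K (p ^ (r + 1)) := by
  rw [mem_degreeLT_iff_coeff] at *
  intro m hm
  rw [coeff_expand hp.out.pos]
  split_ifs with h
  · exact hf _ ((Nat.le_div_iff_mul_le hp.out.pos).2 (by rwa [← pow_succ]))
  · rfl

lemma contract_mem {r : ℕ} {f : K[X]} (hf : f ∈ degreeLT K (p ^ (r + 1))) :
    contract p f ∈ degreeLT K (p ^ r) := by
  rw [mem_degreeLT_iff_coeff] at *
  intro m hm
  rw [coeff_contract hp.out.ne_zero]
  exact hf _ (by rw [pow_succ]; gcongr)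

lemma derivative_mem {n : ℕ} {f : K[X]} (hf : f ∈ degreeLT K n) :
    derivative f ∈ degreeLT K n := by
  rw [mem_degreeLT_iff_coeff] at *
  intro m hm
  rw [coeff_derivative, hf _ (by omega), zero_mul]

lemma topDigit_mem {r : ℕ} {f : K[X]} (hf : f ∈ degreeLT K (p ^ (r + 1))) :
    topDigit p f ∈ degreeLT K (p ^ r) := by
  rw [mem_degreeLT_iff_coeff] at *
  intro m hm
  rw [coeff_topDigit, hf _ (by rw [pow_succ]; have := Nat.mul_le_mul_right p hm; omega), mul_zero]

lemma topDigit_derivative (f : K[X]) : topDigit p (derivative f) = 0 := by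
  ext j
  rw [coeff_topDigit, coeff_derivative]
  have : ((j * p + (p - 1) : ℕ) : K) + 1 = 0 := by
    have h1 : j * p + (p - 1) + 1 = (j + 1) * p := by
      have := hp.out.pos
      rw [add_mul]; omega
    rw [← Nat.cast_succ, Nat.succ_eq_add_one, h1]
    simp
  rw [this]
  simp

lemma exists_antiderivative {r : ℕ} {f : K[X]} (hf : f ∈ degreeLT K (p ^ (r + 1)))
    (h0 : topDigit p f = 0) : ∃ g ∈ degreeLT K (p ^ (r + 1)), derivative g = f := by
  have hcast : ∀ m : ℕ, (m : K) + 1 = 0 → f.coeff m = 0 := by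
    intro m hm
    have h1 : p ∣ m + 1 := by
      rw [← CharP.cast_eq_zero_iff K p]; exact_mod_cast hm
    obtain ⟨j, hj⟩ := h1
    have hj0 : j ≠ 0 := by rintro rfl; simp at hj
    obtain ⟨j, rfl⟩ := Nat.exists_eq_succ_of_ne_zero hj0
    have hm' : m = j * p + (p - 1) := by
      have := hp.out.pos
      rw [Nat.succ_eq_add_one, mul_add, mul_comm p j] at hj
      omega
    have := congrArg (fun u => coeff u j) h0
    simp only [coeff_topDigit, coeff_zero, ← hm'] at this
    exact (mul_eq_zero.1 this).resolve_left (factorial_ne_zero' p)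
  let g : K[X] := ∑ m ∈ Finset.range (p ^ (r + 1)), monomial (m + 1) (f.coeff m / (m + 1))
  have hg : ∀ m, g.coeff (m + 1) = if m < p ^ (r + 1) then f.coeff m / (m + 1) else 0 := by
    intro m
    simp [g, coeff_monomial]
  refine ⟨g, mem_degreeLT_iff_coeff.2 fun m hm => ?_, ?_⟩
  · have hpos : 0 < p ^ (r + 1) := pow_pos hp.out.pos _
    obtain ⟨m, rfl⟩ : ∃ m', m = m' + 1 := ⟨m - 1, by omega⟩
    rw [hg]
    split_ifs with h
    · have h1 : m + 1 = p ^ (r + 1) := by omega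
      have : (m : K) + 1 = 0 := by
        rw [← Nat.cast_succ, Nat.succ_eq_add_one, h1, pow_succ]
        simp
      rw [this, div_zero]
    · rfl
  · ext m
    rw [coeff_derivative, hg]
    split_ifs with h
    · by_cases h0 : (m : K) + 1 = 0
      · rw [hcast m h0, h0, mul_zero]
      · field_simp
    · rw [mem_degreeLT_iff_coeff.1 hf _ (by omega), zero_mul]

lemma exists_topDigit {r : ℕ} {g : K[X]} (hg : g ∈ degreeLT K (p ^ r)) :
    ∃ f ∈ degreeLT K (p ^ (r + 1)), topDigit p f = g := by
  refine ⟨((p - 1).factorial : K)⁻¹ • (X ^ (p - 1) * expand K p g),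
    Submodule.smul_mem _ _ (mem_degreeLT_iff_coeff.2 fun m hm => ?_), ?_⟩
  · rw [coeff_X_pow_mul', coeff_expand hp.out.pos]
    split_ifs with h1 h2
    · apply mem_degreeLT_iff_coeff.1 hg
      obtain ⟨j, hj⟩ := h2
      rw [hj, Nat.mul_div_cancel_left _ hp.out.pos]
      by_contra hlt
      push Not at hlt
      have : p * (j + 1) ≤ p * p ^ r := by gcongr; omega
      rw [pow_succ'] at hm
      have := hp.out.pos
      rw [mul_add] at *
      omega
    · rfl
    · rfl
  · ext j
    rw [map_smul, coeff_smul, coeff_topDigit, coeff_X_pow_mul', if_pos (by omega),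
      Nat.add_sub_cancel, coeff_expand_mul hp.out.pos, smul_eq_mul,
      inv_mul_cancel_left₀ (factorial_ne_zero' p)]
end Affine

/-! ### Cohomology of affine groups over a finite field -/

section AffineVanishing
open Polynomial

variable {K G : Type} [Field K] [Group G] (p : ℕ) [hp : Fact p.Prime] [CharP K p]
  (a : G →* K) (b : G → K) (hb : ∀ g h, b (g * h) = a h * b g + b h)

lemma a_ne_zero (g : G) : a g ≠ 0 := fun h => by
  have := map_mul a g g⁻¹
  simp [h] at this

lemma eval_affRep_zero (w : ℕ) (g : G) (f : K[X]) (y : K) :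
    eval y (affRep p a b hb 0 w g f) = a g ^ w * eval (a g * y + b g) f := by
  simp [affRep_apply, affSub, eval_comp]

lemma toRepresentation_coe {k G A : Type} [CommRing k] [Group G] [AddCommGroup A] [Module k A]
    {ρ : Representation k G A} (S : Subrepresentation ρ) (g : G) (x : S.toSubmodule) :
    ((S.toRepresentation g x : S.toSubmodule) : A) = ρ g x := rfl

/-- An invariant polynomial vanishes at the origin because of the weight, hence everywhere by
transitivity, so it is zero by its degree. -/
lemma van_base_zero [Fintype K] {D : ℕ} (hD : Fintype.card K = p ^ D)
    (hsurj : Function.Surjective b) {z : G} (hz : b z = 0) {w : ℕ} (hw : a z ^ w ≠ 1) :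
    Van (truncSub p a b hb 0 w (p ^ D)).toRepresentation 0 := by
  rw [van_zero_iff]
  intro f hf
  have h1 : ∀ g y, a g ^ w * eval (a g * y + b g) f.1 = eval y f.1 := by
    intro g y
    rw [← eval_affRep_zero p a b hb, ← toRepresentation_coe (truncSub p a b hb 0 w (p ^ D)), hf g]
  have h0 : eval 0 f.1 = 0 := by
    have := h1 z 0
    rw [hz, mul_zero, add_zero] at this
    by_contra h
    exact hw (mul_right_cancel₀ h (by rw [this, one_mul]))
  have h2 : ∀ y, eval y f.1 = 0 := by
    intro y
    obtain ⟨g, rfl⟩ := hsurj y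
    have := h1 g 0
    rw [mul_zero, zero_add, h0] at this
    exact (mul_eq_zero.1 this).resolve_left (pow_ne_zero _ (a_ne_zero a g))
  have hf2 : f.1.degree < ((Finset.univ : Finset K).card : ℕ) := by
    rw [Finset.card_univ, hD]
    exact mem_degreeLT.1 f.2
  exact Subtype.ext (eq_zero_of_degree_lt_of_eval_finset_eq_zero _ hf2 fun y _ => h2 y)

/-- The polynomials of degree less than `|K|` are the functions on `K`. The identity is the trace of
the multiple of the projection to functions supported at the origin, normalized by the order of
the stabilizer of the origin. -/
lemma van_base_succ [Fintype K] [Fintype G] {D : ℕ} (hD : Fintype.card K = p ^ D)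
    (hsurj : Function.Surjective b) (hstab : (Nat.card {g // b g = 0} : K) ≠ 0) (w i : ℕ) :
    Van (truncSub p a b hb 0 w (p ^ D)).toRepresentation (i + 1) := by
  classical
  have hq : 0 < Fintype.card K - 1 := by
    have := Fintype.one_lt_card (α := K); omega
  let δ : K[X] := 1 - X ^ (Fintype.card K - 1)
  have hδ : ∀ y, eval y δ = if y = 0 then 1 else 0 := by
    intro y
    split_ifs with h
    · simp [δ, h, hq.ne']
    · simp [δ, FiniteField.pow_card_sub_one_eq_one y h]
  have hδm : δ ∈ degreeLT K (p ^ D) := by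
    rw [mem_degreeLT, ← hD]
    refine degree_le_natDegree.trans_lt (Nat.cast_lt.2 (lt_of_le_of_lt (natDegree_sub_le _ _) ?_))
    simp
    omega
  let φ : degreeLT K (p ^ D) →ₗ[K] degreeLT K (p ^ D) :=
    { toFun := fun f => ((Nat.card {g // b g = 0} : K)⁻¹ * eval 0 f.1) • ⟨δ, hδm⟩
      map_add' := fun f g => by rw [← add_smul, ← mul_add]; simp
      map_smul' := fun c f => by
        rw [smul_smul, RingHom.id_apply, ← mul_assoc, mul_comm c, mul_assoc]; simp }
  refine van_of_trace (truncSub p a b hb 0 w (p ^ D)).toRepresentation φ ?_ i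
  intro f
  have hval : ∀ g y, eval y ((truncSub p a b hb 0 w (p ^ D)).toRepresentation g
      (φ ((truncSub p a b hb 0 w (p ^ D)).toRepresentation g⁻¹ f))).1 =
      if a g * y + b g = 0 then (Nat.card {g // b g = 0} : K)⁻¹ * eval y f.1 else 0 := by
    intro g y
    change eval y (affRep p a b hb 0 w g (((Nat.card {g // b g = 0} : K)⁻¹ *
      eval 0 (affRep p a b hb 0 w g⁻¹ f.1)) • δ)) = _
    rw [eval_affRep_zero, eval_affRep_zero, eval_smul, hδ]
    split_ifs with h
    · have h1 : a g⁻¹ * b g + b g⁻¹ = 0 := by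
        rw [← hb, mul_inv_cancel, b_one hb]
      have h2 : a g⁻¹ * a g = 1 := by rw [← map_mul, inv_mul_cancel, map_one]
      have h3 : b g⁻¹ = y := by linear_combination h1 - a g⁻¹ * h + y * h2
      have h4 : a g ^ w * a g⁻¹ ^ w = 1 := by rw [← mul_pow, mul_comm, h2, one_pow]
      rw [mul_zero, zero_add, h3, smul_eq_mul]
      linear_combination ((Nat.card {g // b g = 0} : K)⁻¹ * eval y f.1) * h4
    · simp
  apply Subtype.ext
  have hdeg : ∀ u v : degreeLT K (p ^ D), (∀ y, eval y u.1 = eval y v.1) → u.1 = v.1 := by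
    intro u v huv
    have h : (u.1 - v.1).degree < ((Finset.univ : Finset K).card : ℕ) := by
      rw [Finset.card_univ, hD]
      exact mem_degreeLT.1 (u - v).2
    exact eq_of_degree_sub_lt_of_eval_finset_eq _ h fun y _ => huv y
  refine hdeg _ f fun y => ?_
  rw [AddSubmonoidClass.coe_finsetSum, eval_finsetSum]
  refine (Finset.sum_congr rfl fun g _ => hval g y).trans ?_
  rw [← Finset.sum_filter, Finset.sum_const, nsmul_eq_mul]
  have hcard : (Finset.univ.filter fun g => a g * y + b g = 0).card = Nat.card {g // b g = 0} := by
    rw [← Fintype.card_subtype, ← Nat.card_eq_fintype_card]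
    obtain ⟨g0, rfl⟩ := hsurj y
    exact Nat.card_congr ((Equiv.mulLeft g0).subtypeEquiv fun g => by
      rw [Equiv.coe_mulLeft, hb])
  rw [hcard, mul_inv_cancel_left₀ hstab]

lemma van_zero_of_injective {k G A B : Type} [CommRing k] [Group G] [AddCommGroup A] [Module k A]
    [AddCommGroup B] [Module k B] {ρA : Representation k G A} {ρB : Representation k G B}
    (f : A →ₗ[k] B) (hf : ∀ x a, f (ρA x a) = ρB x (f a)) (inj : Function.Injective f)
    (h : Van ρB 0) : Van ρA 0 := by
  rw [van_zero_iff] at *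
  intro a ha
  exact inj ((h _ fun g => by rw [← hf, ha]).trans (map_zero f).symm)

/-- The weight condition carried through the descent in cohomological degree `i`: `c ^ (w + N) ≠ 1`
for every sum `N` of `ℓ` powers of `p` with `i / 2 ≤ ℓ ≤ i`. -/
def WeightOk (c : K) (i w : ℕ) : Prop :=
  ∀ L : List ℕ, i ≤ 2 * L.length → L.length ≤ i → c ^ (w + (L.map (p ^ ·)).sum) ≠ 1

/-- The descent along the two exact sequences for the derivative and for `topDigit`. Going from
degree `i` to degree `i - 1` costs one power of `p` in the weight, and so does going to degree
`i - 2`, whence the lower bound in `WeightOk`. -/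
theorem van_trunc [Fintype K] [Fintype G] {D : ℕ} (hD : Fintype.card K = p ^ D)
    (hsurj : Function.Surjective b) (hstab : (Nat.card {g // b g = 0} : K) ≠ 0)
    {z : G} (hz : b z = 0) (i : ℕ) : ∀ s r w, r + s = D → WeightOk p (a z) i w →
      Van (truncSub p a b hb s w (p ^ r)).toRepresentation i := by
  induction i using Nat.strong_induction_on with
  | _ i IH =>
    intro s
    induction s with
    | zero =>
      intro r w hr hok
      obtain rfl : r = D := by omega
      cases i with
      | zero =>
        exact van_base_zero p a b hb hD hsurj hz (by simpa using hok [] (by simp) (by simp))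
      | succ i => exact van_base_succ p a b hb hD hsurj hstab w i
    | succ s ihs =>
      intro r w hr hok
      have hB := ihs (r + 1) w (by omega) hok
      let e : degreeLT K (p ^ r) →ₗ[K] degreeLT K (p ^ (r + 1)) :=
        (expand K p).toLinearMap.restrict fun f hf => expand_mem p hf
      have he : ∀ x f, e ((truncSub p a b hb (s + 1) w (p ^ r)).toRepresentation x f) =
          (truncSub p a b hb s w (p ^ (r + 1))).toRepresentation x (e f) := fun x f =>
        Subtype.ext (affRep_expand p a b hb s w x f.1).symm
      have heinj : Function.Injective e := fun f g h =>
        Subtype.ext (expand_injective hp.out.pos (congrArg Subtype.val h))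
      cases i with
      | zero => exact van_zero_of_injective e he heinj hB
      | succ i =>
        let ι : (noTopSub p a b hb s (w + p ^ s) (p ^ (r + 1))).toSubmodule →ₗ[K]
          degreeLT K (p ^ (r + 1)) := Submodule.inclusion inf_le_left
        have hι : Function.Injective ι := Submodule.inclusion_injective _
        have hC : Van (noTopSub p a b hb s (w + p ^ s) (p ^ (r + 1))).toRepresentation i := by
          cases i with
          | zero =>
            refine van_zero_of_injective
              (ρB := (truncSub p a b hb s (w + p ^ s) (p ^ (r + 1))).toRepresentation)
              ι (fun _ _ => rfl) hι
              (IH 0 (by omega) s (r + 1) (w + p ^ s) (by omega) fun L h1 h2 => ?_)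
            have := hok (s :: L) (by simp; omega) (by simpa using h2)
            simpa [add_assoc] using this
          | succ j =>
            refine van_left
              (ρB := (truncSub p a b hb s (w + p ^ s) (p ^ (r + 1))).toRepresentation)
              (ρC := (truncSub p a b hb (s + 1) (w + p ^ s + (p - 1) * p ^ s)
                (p ^ r)).toRepresentation)
              ι ((topDigit p).restrict fun f hf => topDigit_mem p hf)
              (fun _ _ => rfl) (fun x f => Subtype.ext (affRep_topDigit p a b hb _ _ x f.1))
              hι ?_ ?_
              (IH (j + 1) (by omega) s (r + 1) (w + p ^ s) (by omega) fun L h1 h2 => ?_)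
              (IH j (by omega) (s + 1) r _ (by omega) fun L h1 h2 => ?_)
            · intro f
              constructor
              · intro h
                exact ⟨⟨f.1, f.2, congrArg Subtype.val h⟩, rfl⟩
              · rintro ⟨u, rfl⟩
                exact Subtype.ext u.2.2
            · intro g
              obtain ⟨f, hf, h⟩ := exists_topDigit p g.2
              exact ⟨⟨f, hf⟩, Subtype.ext h⟩
            · have := hok (s :: L) (by simp; omega) (by simpa using h2)
              simpa [add_assoc] using this
            · have := hok ((s + 1) :: L) (by simp; omega) (by simp; omega)
              have e1 : w + p ^ s + (p - 1) * p ^ s = w + p ^ (s + 1) := by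
                obtain ⟨p', hp'⟩ : ∃ p', p = p' + 1 := ⟨p - 1, by have := hp.out.pos; omega⟩
                rw [show p - 1 = p' by omega, pow_succ]
                nth_rewrite 4 [hp']
                ring
              rw [e1]
              simpa [add_assoc] using this
        refine van_left (ρB := (truncSub p a b hb s w (p ^ (r + 1))).toRepresentation)
          (ρC := (noTopSub p a b hb s (w + p ^ s) (p ^ (r + 1))).toRepresentation)
          e (LinearMap.codRestrict _ (derivative.domRestrict _)
            fun f => ⟨derivative_mem f.2, topDigit_derivative p f.1⟩) he
          (fun x f => Subtype.ext (affRep_derivative p a b hb _ _ x f.1)) heinj ?_ ?_ hB hC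
        · intro f
          constructor
          · intro h
            have h' : derivative f.1 = 0 := congrArg Subtype.val h
            exact ⟨⟨contract p f.1, contract_mem p f.2⟩,
              Subtype.ext (expand_contract p h' hp.out.ne_zero)⟩
          · rintro ⟨u, rfl⟩
            apply Subtype.ext
            change derivative (expand K p u.1) = 0
            rw [derivative_expand]
            simp
        · intro g
          obtain ⟨f, hf, h⟩ := exists_antiderivative p g.2.1 g.2.2
          exact ⟨⟨f, hf⟩, Subtype.ext h⟩

/-- Vanishing for a group acting on the finite field `K` by affine maps `y ↦ a(g) y + b(g)`,
transitively and with stabilizer of the origin of order prime to `p`. -/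
theorem van_affine [Fintype K] [Fintype G] {D : ℕ} (hD : Fintype.card K = p ^ D)
    (hb : ∀ g h, b (g * h) = a h * b g + b h)
    (hsurj : Function.Surjective b) (hstab : (Nat.card {g // b g = 0} : K) ≠ 0)
    {z : G} (hz : b z = 0) {i : ℕ} (hi : 0 < i)
    (hc : ∀ L : List ℕ, L ≠ [] → L.length ≤ i → a z ^ (L.map (p ^ ·)).sum ≠ 1) :
    Van (Representation.trivial K G K) i := by
  have h := van_trunc p a b hb hD hsurj hstab hz i D 0 0 (by omega) (fun L h1 h2 => by
    rw [zero_add]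
    refine hc L ?_ h2
    rintro rfl
    simp at h1
    omega)
  have hCm : ∀ x : K, C x ∈ degreeLT K (p ^ 0) := fun x => by
    rw [mem_degreeLT, pow_zero]
    exact degree_C_le.trans_lt (by norm_num)
  have hm : ∀ f ∈ degreeLT K (p ^ 0), f = C (eval 0 f) := by
    intro f hf
    rw [mem_degreeLT_iff_coeff] at hf
    rw [← coeff_zero_eq_eval_zero]
    refine eq_C_of_natDegree_eq_zero ?_
    rw [natDegree_eq_zero_iff_degree_le_zero, degree_le_iff_coeff_zero]
    intro m hm
    exact hf m (by have : 0 < m := by exact_mod_cast hm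
                   rwa [pow_zero])
  have hinv : ∀ g (f : K[X]), f ∈ degreeLT K (p ^ 0) → affRep p a b hb D 0 g f = f := by
    intro g f hf
    rw [hm f hf, affRep_apply]
    simp
  refine van_retract (ρB := (truncSub p a b hb D 0 (p ^ 0)).toRepresentation)
    { toFun := fun x => ⟨C x, hCm x⟩
      map_add' := fun x y => Subtype.ext (map_add C x y)
      map_smul' := fun x y => Subtype.ext (smul_C x y).symm }
    { toFun := fun f => eval 0 f.1
      map_add' := fun x y => eval_add
      map_smul' := fun x y => eval_smul x y.1 0 } ?_ ?_ ?_ h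
  · intro g x
    exact Subtype.ext (hinv g _ (hCm x)).symm
  · intro g f
    exact congrArg (eval 0) (hinv g f.1 f.2)
  · intro x
    exact eval_C
end AffineVanishing

/-! ### Descent of the coefficient field -/

section Descent
open CategoryTheory groupCohomology

/-- Vanishing of cohomology in terms of inhomogeneous cochains. -/
lemma van_succ_iff {k G A : Type} [CommRing k] [Group G] [AddCommGroup A] [Module k A]
    {ρ : Representation k G A} {i : ℕ} : Van ρ (i + 1) ↔
      ∀ f : (Fin (i + 1) → G) → A, inhomogeneousCochains.d (Rep.of ρ) (i + 1) f = 0 →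
        ∃ f' : (Fin i → G) → A, inhomogeneousCochains.d (Rep.of ρ) i f' = f := by
  rw [van_iff_isZero]
  change Limits.IsZero ((inhomogeneousCochains (Rep.of ρ)).homology (i + 1)) ↔ _
  rw [← HomologicalComplex.exactAt_iff_isZero_homology,
    HomologicalComplex.exactAt_iff' _ i (i + 1) (i + 2) (by simp) (by simp),
    ShortComplex.moduleCat_exact_iff]
  rw [← inhomogeneousCochains.d_def, ← inhomogeneousCochains.d_def]
  rfl

/-- A cocycle with values in `F` is a coboundary over `K`, and any `F`-linear retraction `K → F` turns
a primitive over `K` into one over `F`. -/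
lemma van_trivial_descend {F K G : Type} [Field F] [Field K] [Algebra F K] [Group G] {i : ℕ}
    (h : Van (Representation.trivial K G K) (i + 1)) :
    Van (Representation.trivial F G F) (i + 1) := by
  obtain ⟨π, hπ⟩ := (Algebra.linearMap F K).exists_leftInverse_of_injective
    (LinearMap.ker_eq_bot.2 (algebraMap F K).injective)
  have hπ' : ∀ x, π (algebraMap F K x) = x := fun x => LinearMap.congr_fun hπ x
  rw [van_succ_iff] at *
  intro f hf
  obtain ⟨f', hf'⟩ := h (fun g => algebraMap F K (f g)) (by
    ext g
    have := congrArg (algebraMap F K) (congrFun hf g)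
    simp [inhomogeneousCochains.d_hom_apply] at this ⊢
    exact this.trans (map_zero _))
  refine ⟨fun g => π (f' g), ?_⟩
  ext g
  have := congrArg π (congrFun hf' g)
  rw [hπ'] at this
  rw [← this]
  have hs : ∀ (n : ℕ) x, π ((-1 : K) ^ n * x) = (-1 : F) ^ n * π x := by
    intro n x
    rcases Nat.even_or_odd n with h' | h' <;> simp [h'.neg_one_pow]
  simp [inhomogeneousCochains.d_hom_apply, hs]
end Descent

/-! ### Sums of powers of `p` divisible by `p ^ d - 1` -/

section Digits

lemma sum_range_rotate (d s : ℕ) (F : ℕ → ℕ) :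
    ∑ j ∈ Finset.range d, F ((s + j) % d) = ∑ j ∈ Finset.range d, F j := by
  conv_rhs => rw [← Nat.image_Ico_mod s d, Finset.sum_image (Nat.mod_injOn_Ico s d),
    Finset.sum_Ico_eq_sum_range]
  simp

/-- If `p ^ d - 1` divides `h` times a sum of `ℓ ≥ 1` powers of `p`, then `d * (p - 1) ≤ h * ℓ`.
Multiplying by `p ^ j` rotates the exponents modulo `d`, and each of the `d` rotated multiples is at
least `p ^ d - 1`; adding them up gives the bound. -/
lemma digit_bound {p d h : ℕ} (hp : 2 ≤ p) (hh : 0 < h) {L : List ℕ} (hL : L ≠ [])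
    (hdvd : p ^ d - 1 ∣ h * (L.map (p ^ ·)).sum) : d * (p - 1) ≤ h * L.length := by
  rcases Nat.eq_zero_or_pos d with rfl | hd
  · simp
  have hgeom : (p - 1) * ∑ j ∈ Finset.range d, p ^ j = p ^ d - 1 := by
    rw [mul_comm]; exact geom_sum_mul_of_one_le (by omega) d
  set S := ∑ j ∈ Finset.range d, p ^ j with hS
  have hSpos : 0 < S := Finset.sum_pos (fun j _ => by positivity) ⟨0, by simpa using hd⟩
  have hpd : 1 ≤ p ^ d := Nat.one_le_pow _ _ (by omega)
  have hmod : ∀ e, p ^ (e % d) ≡ p ^ e [MOD (p ^ d - 1)] := by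
    intro e
    have h1 : p ^ d ≡ 1 [MOD (p ^ d - 1)] :=
      ((Nat.modEq_iff_dvd' hpd).2 dvd_rfl).symm
    conv_rhs => rw [← Nat.mod_add_div e d, pow_add, pow_mul]
    simpa using ((h1.pow (e / d)).mul_left (p ^ (e % d))).symm
  have hM : ∀ j, p ^ d - 1 ≤ h * (L.map fun s => p ^ ((s + j) % d)).sum := by
    intro j
    apply Nat.le_of_dvd
    · apply Nat.mul_pos hh
      obtain ⟨s, L', rfl⟩ := List.exists_cons_of_ne_nil hL
      simp only [List.map_cons, List.sum_cons]
      positivity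
    · have h1 : ∀ L : List ℕ, (L.map fun s => p ^ ((s + j) % d)).sum ≡
          (L.map (p ^ ·)).sum * p ^ j [MOD (p ^ d - 1)] := by
        intro L
        induction L with
        | nil => simp; rfl
        | cons s L ih =>
          simp only [List.map_cons, List.sum_cons, add_mul]
          exact Nat.ModEq.add (by rw [← pow_add]; exact hmod _) ih
      have h2 := (h1 L).mul_left h
      rw [← mul_assoc] at h2
      exact (Nat.modEq_zero_iff_dvd.1 (h2.trans (Nat.modEq_zero_iff_dvd.2 (hdvd.mul_right _))))
  have hsum : ∀ L : List ℕ, ∑ j ∈ Finset.range d, (L.map fun s => p ^ ((s + j) % d)).sum =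
      L.length * S := by
    intro L
    induction L with
    | nil => simp
    | cons s L ih =>
      simp only [List.map_cons, List.sum_cons, Finset.sum_add_distrib, ih, List.length_cons]
      rw [sum_range_rotate d s (p ^ ·), add_mul, one_mul, add_comm]
  have := Finset.sum_le_sum fun j (_ : j ∈ Finset.range d) => hM j
  rw [← Finset.mul_sum, hsum, Finset.sum_const, Finset.card_range, smul_eq_mul, ← hgeom,
    ← mul_assoc, ← mul_assoc] at this
  exact Nat.le_of_mul_le_mul_right this hSpos

end Digits

/-! ### Affine groups acting on a vector space -/

section VectorAffine

variable {k : Type} [Field k] [Fintype k] (p : ℕ) [hp : Fact p.Prime] [CharP k p]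

lemma not_dvd_card_of_pow {H : Type} [Group H] [Finite H] (h : ∀ x : H, x ^ p = 1 → x = 1) :
    ¬ p ∣ Nat.card H := by
  intro hd
  obtain ⟨x, hx⟩ := exists_prime_orderOf_dvd_card' (G := H) p hd
  have h1 := h x (by rw [← hx]; exact pow_orderOf_eq_one x)
  rw [h1, orderOf_one] at hx
  exact hp.out.one_lt.ne hx

lemma isUnit_cast_of_not_dvd {n : ℕ} (h : ¬ p ∣ n) : IsUnit (n : ZMod p) := by
  rw [isUnit_iff_ne_zero, Ne, ZMod.natCast_eq_zero_iff]
  exact h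

/-- The version of `van_affine` for a group acting on `k ^ m` by `y ↦ α(g) y + v(g)`, with
coefficients in the prime field: identify `k ^ m` with the degree `m` extension of `k`. -/
theorem van_affine_vec {m : ℕ} (hm : m ≠ 0) {E : Type} [Group E] [Finite E]
    (α : E →* k) (v : E → Fin m → k)
    (hv : ∀ g h, v (g * h) = α h • v g + v h) (hsurj : Function.Surjective v)
    (hstab : ¬ p ∣ Nat.card {g // v g = 0}) {z : E} (hz : v z = 0) {i : ℕ} (hi : 0 < i)
    (hc : ∀ L : List ℕ, L ≠ [] → L.length ≤ i → α z ^ (L.map (p ^ ·)).sum ≠ 1) :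
    Van (Representation.trivial (ZMod p) E (ZMod p)) i := by
  have : NeZero m := ⟨hm⟩
  let K := FiniteField.Extension k p m
  have : Finite K := Module.finite_of_finite k
  have := Fintype.ofFinite K
  have := Fintype.ofFinite E
  have : CharP K p := charP_of_injective_algebraMap (algebraMap k K).injective p
  let : Algebra (ZMod p) K := ZMod.algebra K p
  obtain ⟨D, -, hD⟩ := FiniteField.card K p
  have hrank : Module.finrank k (Fin m → k) = Module.finrank k K := by
    rw [Module.finrank_fin_fun]
    exact (FiniteField.finrank_extension k p m).symm
  let e : (Fin m → k) ≃ₗ[k] K := LinearEquiv.ofFinrankEq _ _ hrank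
  obtain ⟨i, rfl⟩ := Nat.exists_eq_succ_of_ne_zero hi.ne'
  refine van_trivial_descend (K := K) ?_
  refine van_affine p ((algebraMap k K : k →* K).comp α) (fun g => e (v g)) hD ?_ ?_ ?_
    (z := z) ?_ hi ?_
  · intro g h
    rw [hv, map_add, map_smul, Algebra.smul_def]
    rfl
  · exact e.surjective.comp hsurj
  · simp only [LinearEquiv.map_eq_zero_iff]
    rw [Ne, CharP.cast_eq_zero_iff K p]
    exact hstab
  · simp [hz]
  · intro L h1 h2 h3
    refine hc L h1 h2 ((algebraMap k K).injective ?_)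
    rw [map_pow, map_one]
    exact h3
end VectorAffine

/-! ### The stabilizer of a line -/

section Parabolic

variable {k : Type} [Field k] {m : ℕ}

/-- The block upper triangular matrix with rows `(s, v)` and `(0, A)`. -/
def blk (s : k) (v : Fin m → k) (A : Matrix (Fin m) (Fin m) k) :
    Matrix (Fin (m + 1)) (Fin (m + 1)) k :=
  Matrix.of (Fin.cons (Fin.cons s v) (fun i => Fin.cons 0 (A i)))

@[simp] lemma blk_zero_zero (s : k) (v : Fin m → k) (A) : blk s v A 0 0 = s := rfl
@[simp] lemma blk_zero_succ (s : k) (v : Fin m → k) (A) (j : Fin m) :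
    blk s v A 0 j.succ = v j := rfl
@[simp] lemma blk_succ_zero (s : k) (v : Fin m → k) (A) (i : Fin m) :
    blk s v A i.succ 0 = 0 := rfl
@[simp] lemma blk_succ_succ (s : k) (v : Fin m → k) (A) (i j : Fin m) :
    blk s v A i.succ j.succ = A i j := rfl

lemma blk_mul (s s' : k) (v v' : Fin m → k) (A A' : Matrix (Fin m) (Fin m) k) :
    blk s v A * blk s' v' A' = blk (s * s') (s • v' + Matrix.vecMul v A') (A * A') := by
  ext i j
  refine Fin.cases ?_ (fun i => ?_) i <;> refine Fin.cases ?_ (fun j => ?_) j <;>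
    simp [Matrix.mul_apply, Fin.sum_univ_succ, Matrix.vecMul, dotProduct]

lemma blk_one : blk (1 : k) (0 : Fin m → k) 1 = 1 := by
  ext i j
  refine Fin.cases ?_ (fun i => ?_) i <;> refine Fin.cases ?_ (fun j => ?_) j <;>
    simp [Matrix.one_apply, Fin.succ_ne_zero, (Fin.succ_ne_zero _).symm]

lemma blk_det (s : k) (v : Fin m → k) (A : Matrix (Fin m) (Fin m) k) :
    (blk s v A).det = s * A.det := by
  rw [Matrix.det_succ_column_zero, Fin.sum_univ_succ]
  have h : (blk s v A).submatrix Fin.succ Fin.succ = A := by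
    ext i j; simp
  simp [h]

lemma eq_blk {B : Matrix (Fin (m + 1)) (Fin (m + 1)) k} (h : ∀ i : Fin m, B i.succ 0 = 0) :
    B = blk (B 0 0) (fun j => B 0 j.succ) (B.submatrix Fin.succ Fin.succ) := by
  ext i j
  refine Fin.cases ?_ (fun i => ?_) i <;> refine Fin.cases ?_ (fun j => ?_) j <;>
    simp [h]

variable (p : ℕ) [hp : Fact p.Prime] [CharP k p]

lemma eq_one_of_pow_char {x : k} (h : x ^ p = 1) : x = 1 :=
  frobenius_inj k p (by rw [frobenius_def, h, map_one])

/-- `van_extension` for trivial coefficients. -/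
lemma van_trivial_extension {G Q : Type} [Group G] [Finite G] [Group Q] [Finite Q]
    (E : Subgroup G) [E.Normal] (f : Q →* G) (hf : ∀ g, ∃ q, ∃ e ∈ E, g = f q * e)
    (hc : ¬ p ∣ Nat.card (E.comap f)) (i : ℕ)
    (hE : ∀ b ≤ i, Van (Representation.trivial (ZMod p) E (ZMod p)) (b + 1))
    (hQ : Van (Representation.trivial (ZMod p) Q (ZMod p)) (i + 1)) :
    Van (Representation.trivial (ZMod p) G (ZMod p)) (i + 1) := by
  refine van_extension E f hf (isUnit_cast_of_not_dvd p hc) i _ hE ?_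
  refine van_retract (ρB := Representation.trivial (ZMod p) Q (ZMod p)) (Submodule.subtype _)
    (LinearMap.codRestrict (Representation.invariants
      ((Representation.trivial (ZMod p) G (ZMod p)).comp E.subtype)) LinearMap.id fun c e => rfl) (fun _ _ => rfl) (fun _ _ => rfl)
    (fun _ => rfl) hQ

variable [Fintype k]

/-- Vanishing for a group `P` of block triangular matrices (embedded by `j`) that contains the
unipotent radical `(1, v; 0, 1)` and a copy `f` of `GL_m` in its block diagonal part. The normal
subgroup `E` where the lower right block is scalar is of affine type, with multiplier
`α = τ / σ` and translation part `v = σ⁻¹ u`, where `(σ, u; 0, τ)` are the blocks. -/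
theorem van_parabolic [NeZero m] {P : Type} [Group P] [Finite P]
    (j : P →* Matrix (Fin (m + 1)) (Fin (m + 1)) k) (hj : Function.Injective j)
    (hP : ∀ g (i : Fin m), j g i.succ 0 = 0)
    (f : GL (Fin m) k →* P) (δ : GL (Fin m) k → k) (hf : ∀ A, j (f A) = blk (δ A) 0 A.1)
    (hu : ∀ v, ∃ g, j g = blk 1 v 1)
    (z : P) (s t : k) (hz : j z = blk s 0 (t • 1)) (i : ℕ)
    (hc : ∀ L : List ℕ, L ≠ [] → L.length ≤ i + 1 → (t / s) ^ (L.map (p ^ ·)).sum ≠ 1)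
    (hGL : Van (Representation.trivial (ZMod p) (GL (Fin m) k) (ZMod p)) (i + 1)) :
    Van (Representation.trivial (ZMod p) P (ZMod p)) (i + 1) := by
  let σ : P → k := fun g => j g 0 0
  let u : P → Fin m → k := fun g j' => j g 0 j'.succ
  let A : P → Matrix (Fin m) (Fin m) k := fun g => (j g).submatrix Fin.succ Fin.succ
  have hblk : ∀ g, j g = blk (σ g) (u g) (A g) := fun g => eq_blk (hP g)
  have hmul : ∀ g h, blk (σ (g * h)) (u (g * h)) (A (g * h)) =
      blk (σ g * σ h) (σ g • u h + Matrix.vecMul (u g) (A h)) (A g * A h) := fun g h => by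
    rw [← hblk, map_mul, hblk, hblk, blk_mul]
  have hof : ∀ {g a b C}, j g = blk a b C → σ g = a ∧ u g = b ∧ A g = C := by
    intro g a b C h
    refine ⟨by simp [σ, h], ?_, ?_⟩
    · ext; simp [u, h]
    · ext; simp [A, h]
  have hσ : ∀ g h, σ (g * h) = σ g * σ h := fun g h =>
    (hof (by rw [hblk, hmul])).1
  have hum : ∀ g h, u (g * h) = σ g • u h + Matrix.vecMul (u g) (A h) := fun g h =>
    (hof (by rw [hblk, hmul])).2.1
  have hA : ∀ g h, A (g * h) = A g * A h := fun g h =>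
    (hof (by rw [hblk, hmul])).2.2
  obtain ⟨hσ1, hu1, hA1⟩ := hof (g := 1) (by rw [map_one, blk_one])
  have hσ0 : ∀ g, σ g ≠ 0 := fun g h => by
    have := hσ g g⁻¹
    rw [mul_inv_cancel, hσ1, h, zero_mul] at this
    exact one_ne_zero this
  let E : Subgroup P :=
    { carrier := {g | ∃ c : kˣ, A g = (c : k) • 1}
      one_mem' := ⟨1, by simp [hA1]⟩
      mul_mem' := by
        rintro a b ⟨c, hc⟩ ⟨c', hc'⟩
        exact ⟨c * c', by
          rw [hA, hc, hc', smul_mul_assoc, one_mul, smul_smul, Units.val_mul]⟩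
      inv_mem' := by
        rintro a ⟨c, hc⟩
        refine ⟨c⁻¹, ?_⟩
        have h1 := hA a a⁻¹
        rw [mul_inv_cancel, hA1, hc, smul_mul_assoc, one_mul] at h1
        rw [h1, smul_smul, Units.inv_mul, one_smul] }
  have hE : E.Normal := ⟨by
    rintro n ⟨c, hc⟩ g
    refine ⟨c, ?_⟩
    rw [hA, hA, hc, mul_smul_comm, mul_one, smul_mul_assoc, ← hA, mul_inv_cancel, hA1]⟩
  let τ : E → k := fun e => A e 0 0
  have hτ : ∀ e : E, A e = τ e • 1 := by
    rintro ⟨e, c, hc⟩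
    simp [τ, hc]
  have hτ_of : ∀ (e : E) (c : k), A e = c • 1 → τ e = c := fun e c h => by
    simp [τ, h]
  have hτm : ∀ e e' : E, τ (e * e') = τ e * τ e' := fun e e' =>
    hτ_of _ _ (by rw [Subgroup.coe_mul, hA, hτ e, hτ e']; simp [smul_smul, mul_comm])
  have hτ1 : τ 1 = 1 := hτ_of _ _ (by simp [hA1])
  let α : E →* k :=
    { toFun := fun e => τ e / σ e
      map_one' := by simp [hτ1, hσ1]
      map_mul' := fun e e' => by
        simp only [hτm, Subgroup.coe_mul, hσ]
        exact mul_div_mul_comm _ _ _ _ }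
  let v : E → Fin m → k := fun e => (σ e)⁻¹ • u e
  have hv : ∀ e e', v (e * e') = α e' • v e + v e' := by
    intro e e'
    have h1 := hσ0 e
    have h2 := hσ0 e'
    ext l
    simp only [v, α, Subgroup.coe_mul, hσ, hum, hτ e', Matrix.vecMul_smul, Matrix.vecMul_one,
      Pi.smul_apply, Pi.add_apply, smul_eq_mul, MonoidHom.coe_mk, OneHom.coe_mk]
    field_simp
    ring
  have hσp : ∀ (x : P) (N : ℕ), σ (x ^ N) = σ x ^ N := fun x N => by
    induction N with
    | zero => simp [hσ1]
    | succ N ih => rw [pow_succ, hσ, ih, pow_succ]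
  have hτp : ∀ (x : E) (N : ℕ), τ (x ^ N) = τ x ^ N := fun x N => by
    induction N with
    | zero => simp [hτ1]
    | succ N ih => rw [pow_succ, hτm, ih, pow_succ]
  have hzE : z ∈ E := by
    have hzA : A z = t • 1 := (hof hz).2.2
    refine ⟨Units.mk0 t ?_, hzA⟩
    rintro rfl
    have h1 := hA z z⁻¹
    rw [mul_inv_cancel, hA1, hzA, zero_smul, zero_mul] at h1
    exact one_ne_zero h1
  refine van_trivial_extension p E f ?_ ?_ i (fun b hb => ?_) hGL
  · intro g
    have hdet : (A g) * (A g⁻¹) = 1 := by rw [← hA, mul_inv_cancel, hA1]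
    have hdet' : (A g⁻¹) * (A g) = 1 := by rw [← hA, inv_mul_cancel, hA1]
    let q : GL (Fin m) k := ⟨A g, A g⁻¹, hdet, hdet'⟩
    refine ⟨q, (f q)⁻¹ * g, ⟨1, ?_⟩, by group⟩
    have h1 : A (f q⁻¹) = A g⁻¹ := (hof (hf q⁻¹)).2.2
    rw [← map_inv, hA, h1, hdet']
    simp
  · refine not_dvd_card_of_pow p ?_
    rintro ⟨q, c, hq⟩ hx
    have h1 : A (f q) = q.1 := (hof (hf q)).2.2
    rw [h1] at hq
    have h2 : q ^ p = 1 := congrArg Subtype.val hx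
    have h3 : ((c : k) • (1 : Matrix (Fin m) (Fin m) k)) ^ p = 1 := by
      rw [← hq]; exact congrArg Units.val h2
    rw [smul_pow, one_pow] at h3
    have h4 : (c : k) ^ p = 1 := by simpa using congrFun (congrFun h3 0) 0
    have h5 := eq_one_of_pow_char p h4
    refine Subtype.ext (Units.ext ?_)
    show q.1 = 1
    rw [hq, h5, one_smul]
  · refine van_affine_vec p (NeZero.ne m) α v hv ?_ ?_ (z := ⟨z, hzE⟩) ?_ b.succ_pos ?_
    · intro w
      obtain ⟨g, hg⟩ := hu w
      obtain ⟨h1, h2, h3⟩ := hof hg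
      exact ⟨⟨g, 1, by simp [h3]⟩, by simp [v, h1, h2]⟩
    · let S : Subgroup E :=
        { carrier := {e | v e = 0}
          one_mem' := by simp [v, hu1]
          mul_mem' := fun {a b} (ha : v a = 0) (hb : v b = 0) => by
            show v (a * b) = 0
            rw [hv, ha, hb]; simp
          inv_mem' := fun {a} (ha : v a = 0) => by
            show v a⁻¹ = 0
            have h1 := hv a a⁻¹
            rw [mul_inv_cancel, ha, smul_zero, zero_add] at h1
            rw [← h1]
            simp [v, hu1] }
      change ¬ p ∣ Nat.card S
      refine not_dvd_card_of_pow p ?_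
      rintro ⟨e, he⟩ hx
      have he : v e = 0 := he
      have h2 : e ^ p = 1 := congrArg Subtype.val hx
      have h3 : τ e = 1 := eq_one_of_pow_char p (by rw [← hτp, h2, hτ1])
      have h4 : σ e = 1 := eq_one_of_pow_char p (by rw [← hσp, ← Subgroup.coe_pow, h2]; exact hσ1)
      have h5 : u e = 0 := by simpa [v, h4] using he
      refine Subtype.ext (Subtype.ext (hj ?_))
      show j e = j 1
      rw [hblk, hτ, h3, h4, h5, one_smul, blk_one, map_one]
    · simp [v, (hof hz).2.1]
    · intro L h1 h2
      have h3 := hτ_of ⟨z, hzE⟩ t (hof hz).2.2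
      have h4 : α ⟨z, hzE⟩ = t / s := by
        show τ ⟨z, hzE⟩ / σ z = t / s
        rw [h3, (hof hz).1]
      rw [h4]
      exact hc L h1 (h2.trans (by omega))

/-- Vanishing for a linear group transitive on nonzero vectors, by reduction to the stabilizer of
the line through the first basis vector. Its index divides `q ^ (m + 1) - 1`. -/
theorem van_step [NeZero m] {Γ : Type} [Group Γ] [Finite Γ]
    (j : Γ →* Matrix (Fin (m + 1)) (Fin (m + 1)) k) (hj : Function.Injective j)
    (htrans : ∀ x : Fin (m + 1) → k, x ≠ 0 → ∃ g, (j g).mulVec (Pi.single 0 1) = x)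
    (f : GL (Fin m) k →* Γ) (δ : GL (Fin m) k → k) (hf : ∀ A, j (f A) = blk (δ A) 0 A.1)
    (hu : ∀ v, ∃ g, j g = blk 1 v 1)
    (z : Γ) (s t : k) (hz : j z = blk s 0 (t • 1)) (i : ℕ)
    (hc : ∀ L : List ℕ, L ≠ [] → L.length ≤ i + 1 → (t / s) ^ (L.map (p ^ ·)).sum ≠ 1)
    (hGL : Van (Representation.trivial (ZMod p) (GL (Fin m) k) (ZMod p)) (i + 1)) :
    Van (Representation.trivial (ZMod p) Γ (ZMod p)) (i + 1) := by
  have hcol : ∀ g (l : Fin (m + 1)), (j g).mulVec (Pi.single 0 1) l = j g l 0 := by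
    intro g l; simp
  let act : MulAction Γ (Fin (m + 1) → k) :=
    { smul := fun g x => (j g).mulVec x
      one_smul := fun x => by
        show (j 1).mulVec x = x
        simp
      mul_smul := fun g h x => by
        show (j (g * h)).mulVec x = (j g).mulVec ((j h).mulVec x)
        simp }
  have hact : ∀ g (x : Fin (m + 1) → k), act.smul g x = (j g).mulVec x := fun _ _ => rfl
  let P : Subgroup Γ :=
    { carrier := {g | ∀ l : Fin m, j g l.succ 0 = 0}
      one_mem' := fun l => by simp
      mul_mem' := fun {a b} ha hb l => by
        show j (a * b) l.succ 0 = 0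
        rw [map_mul, eq_blk ha, eq_blk hb, blk_mul, blk_succ_zero]
      inv_mem' := fun {g} (hg : ∀ l : Fin m, j g l.succ 0 = 0) l => by
        have h1 : j g⁻¹ * j g = 1 := by rw [← map_mul, inv_mul_cancel, map_one]
        have h2 : ∀ r, j g⁻¹ r 0 * j g 0 0 = (1 : Matrix (Fin (m + 1)) (Fin (m + 1)) k) r 0 := by
          intro r
          rw [← h1, Matrix.mul_apply, Fin.sum_univ_succ]
          simp [hg]
        have h3 := h2 0
        have h4 := h2 l.succ
        rw [Matrix.one_apply_eq] at h3
        rw [Matrix.one_apply_ne (Fin.succ_ne_zero l)] at h4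
        exact (mul_eq_zero.mp h4).resolve_right (right_ne_zero_of_mul_eq_one h3) }
  refine van_of_index _ P ?_ ?_
  · refine isUnit_cast_of_not_dvd p ?_
    have hle : MulAction.stabilizer Γ (Pi.single 0 1 : Fin (m + 1) → k) ≤ P := by
      intro g hg l
      have h1 : (j g).mulVec (Pi.single 0 1) = Pi.single 0 1 := hg
      rw [← hcol, h1, Pi.single_eq_of_ne (Fin.succ_ne_zero l)]
    have horb : MulAction.orbit Γ (Pi.single 0 1 : Fin (m + 1) → k) = {0}ᶜ := by
      ext x
      rw [Set.mem_compl_singleton_iff]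
      refine ⟨?_, fun hx => htrans x hx⟩
      rintro ⟨g, rfl⟩ h0
      have h0 : (j g).mulVec (Pi.single 0 1 : Fin (m + 1) → k) = 0 := h0
      have h1 : (j g⁻¹).mulVec ((j g).mulVec (Pi.single 0 1 : Fin (m + 1) → k)) =
          Pi.single 0 1 := by
        rw [Matrix.mulVec_mulVec, ← map_mul, inv_mul_cancel, map_one, Matrix.one_mulVec]
      rw [h0, Matrix.mulVec_zero] at h1
      simpa using congrFun h1 0
    intro hdvd
    have h1 := hdvd.trans (Subgroup.index_dvd_of_le hle)
    rw [MulAction.index_stabilizer, horb, Set.ncard_compl, Set.ncard_singleton,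
      Nat.card_eq_fintype_card, Fintype.card_fun, Fintype.card_fin] at h1
    obtain ⟨D, -, hD⟩ := FiniteField.card k p
    have h2 : p ∣ Fintype.card k ^ (m + 1) := by
      rw [hD]
      exact dvd_pow (dvd_pow_self p D.pos.ne') m.succ_ne_zero
    have h3 : 1 ≤ Fintype.card k ^ (m + 1) := Nat.one_le_pow _ _ Fintype.card_pos
    have h4 := (Nat.dvd_sub_iff_right h3 h2).mp h1
    exact hp.out.one_lt.ne' (Nat.dvd_one.mp h4)
  · refine van_parabolic p (j.comp P.subtype) (hj.comp P.subtype_injective) (fun g => g.2)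
      (f.codRestrict P fun A l => by rw [hf]; rfl) δ hf ?_ ⟨z, fun l => by rw [hz]; rfl⟩ s t hz i
      hc hGL
    intro v
    obtain ⟨g, hg⟩ := hu v
    exact ⟨⟨g, fun l => by rw [hg]; rfl⟩, hg⟩
end Parabolic

/-! ### General and special linear groups -/

section Linear

variable {k : Type} [Field k]

/-- `SL` is transitive on nonzero vectors in dimension at least two: it is so on lines, and
`diag(c⁻¹, c, 1, …, 1)` adjusts the scalar. -/
lemma sl_transitive {l : ℕ} (x : Fin (l + 1 + 1) → k) (hx : x ≠ 0) :
    ∃ g : Matrix.SpecialLinearGroup (Fin (l + 1 + 1)) k, g.1.mulVec (Pi.single 0 1) = x := by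
  have he : (Pi.single 0 1 : Fin (l + 1 + 1) → k) ≠ 0 := fun h => by
    simpa using congrFun h 0
  have : MulAction.IsPretransitive (Matrix.SpecialLinearGroup (Fin (l + 1 + 1)) k)
      (Projectivization k (Fin (l + 1 + 1) → k)) :=
    inferInstance
  obtain ⟨g, hg⟩ := MulAction.exists_smul_eq (Matrix.SpecialLinearGroup (Fin (l + 1 + 1)) k)
    (Projectivization.mk k _ he) (Projectivization.mk k x hx)
  have hg' : ∃ c : kˣ, c • x = g.1.mulVec (Pi.single 0 1) := by
    have h2 := hg
    rw [Projectivization.matrixSpecialLinearGroup_smul_def] at h2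
    rw [Projectivization.smul_mk, Projectivization.mk_eq_mk_iff] at h2
    obtain ⟨c, hc⟩ := h2
    exact ⟨c, hc⟩
  obtain ⟨c, hc⟩ := hg'
  let D : Matrix (Fin (l + 1 + 1)) (Fin (l + 1 + 1)) k :=
    Matrix.diagonal (Fin.cons (c : k)⁻¹ (Fin.cons (c : k) fun _ => 1))
  have hD : D.det = 1 := by
    simp [D, Matrix.det_diagonal, Fin.prod_univ_succ]
  let D' : Matrix.SpecialLinearGroup (Fin (l + 1 + 1)) k := ⟨D, hD⟩
  refine ⟨g * D', ?_⟩
  have h1 : D.mulVec (Pi.single 0 1) = (c : k)⁻¹ • (Pi.single 0 1) := by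
    ext i
    refine Fin.cases ?_ (fun i => ?_) i <;> simp [D]
  rw [Matrix.SpecialLinearGroup.coe_mul, ← Matrix.mulVec_mulVec]
  show g.1.mulVec (D.mulVec _) = x
  rw [h1, Matrix.mulVec_smul, ← hc, Units.smul_def, smul_smul, inv_mul_cancel₀ c.ne_zero, one_smul]

lemma exists_generator [Fintype k] {q : ℕ} (hcard : Fintype.card k = q) :
    ∃ ζ : kˣ, orderOf ζ = q - 1 := by
  obtain ⟨ζ, hζ⟩ := IsCyclic.exists_generator (α := kˣ)
  refine ⟨ζ, ?_⟩
  rw [orderOf_eq_card_of_forall_mem_zpowers hζ, Nat.card_units,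
    Nat.card_eq_fintype_card, hcard]

variable (p : ℕ) [hp : Fact p.Prime]

lemma van_of_not_dvd {G : Type} [Group G] [Finite G] (h : ¬ p ∣ Nat.card G) (i : ℕ) :
    Van (Representation.trivial (ZMod p) G (ZMod p)) (i + 1) := by
  have := Fintype.ofFinite G
  have hu := (isUnit_cast_of_not_dvd p h).ne_zero
  refine van_of_trace _ ((Nat.card G : ZMod p)⁻¹ • LinearMap.id) (fun a => ?_) i
  rw [Nat.card_eq_fintype_card] at *
  simp [hu]

/-- `(ζ ^ r) ^ N ≠ 1` for a sum `N` of few powers of `p`, where `ζ` generates the unit group. -/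
lemma pow_ne_one_of_generator {d h : ℕ} (hh : 0 < h)
    {ζ : kˣ} (hζ : orderOf ζ = p ^ d - 1) {r : ℕ} (hr : Nat.gcd r (p ^ d - 1) ∣ h)
    {i : ℕ} (hi : h * i < d * (p - 1)) (L : List ℕ) (hL : L ≠ []) (hLi : L.length ≤ i) :
    ((ζ : k) ^ r) ^ (L.map (p ^ ·)).sum ≠ 1 := by
  intro h1
  rw [← pow_mul] at h1
  have h2 : ζ ^ (r * (L.map (p ^ ·)).sum) = 1 := Units.ext (by simpa using h1)
  have h3 := orderOf_dvd_of_pow_eq_one h2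
  rw [hζ] at h3
  have h4 : p ^ d - 1 ∣ h * (L.map (p ^ ·)).sum := by
    refine dvd_trans ?_ (mul_dvd_mul_right hr _)
    rw [← Nat.gcd_mul_right]
    exact Nat.dvd_gcd h3 (dvd_mul_right _ _)
  have h5 := digit_bound hp.out.two_le hh hL h4
  have h6 := Nat.mul_le_mul_left h hLi
  omega

variable [Fintype k] [CharP k p]

/-- Induction on the size; `GL_1` has order prime to `p`, and the torus element used
in the inductive step is `diag(1, ζ, …, ζ)`. -/
theorem van_gl {d : ℕ} (hcard : Fintype.card k = p ^ d) {i : ℕ} (hi : i + 1 < d * (p - 1))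
    (m : ℕ) :
    Van (Representation.trivial (ZMod p) (GL (Fin (m + 1)) k) (ZMod p)) (i + 1) := by
  obtain ⟨ζ, hζ⟩ := exists_generator hcard
  induction m with
  | zero =>
    refine van_of_not_dvd p (not_dvd_card_of_pow p fun x hx => ?_) i
    have h1 : x.1.det ^ p = 1 := by
      rw [← Matrix.det_pow, ← Units.val_pow_eq_pow_val, hx]; simp
    have h2 := eq_one_of_pow_char p h1
    ext a b
    rw [Fin.fin_one_eq_zero a, Fin.fin_one_eq_zero b]
    simpa using h2
  | succ m ih =>
    let F : Matrix (Fin (m + 1)) (Fin (m + 1)) k →*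
        Matrix (Fin (m + 1 + 1)) (Fin (m + 1 + 1)) k :=
      { toFun := fun A => blk 1 0 A
        map_one' := blk_one
        map_mul' := fun A B => by simp [blk_mul] }
    have hinv : ∀ v : Fin (m + 1) → k, blk 1 v 1 * blk (1 : k) (-v) 1 = 1 := fun v => by
      rw [blk_mul]; simp [blk_one]
    refine van_step p (Units.coeHom _) Units.val_injective ?_ (Units.map F) (fun _ => 1)
      (fun A => rfl) (fun v => ⟨⟨blk 1 v 1, blk 1 (-v) 1, hinv v, by simpa using hinv (-v)⟩, rfl⟩)
      (Units.map F (Units.map (Matrix.scalar (Fin (m + 1))).toMonoidHom ζ)) 1 ζ ?_ i ?_ ih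
    · intro x hx
      obtain ⟨g, hg⟩ := sl_transitive x hx
      exact ⟨(g : GL (Fin (m + 1 + 1)) k), hg⟩
    · show blk 1 0 _ = blk 1 0 _
      congr 1
      ext a b
      simp [Matrix.scalar_apply, Matrix.diagonal_apply, Matrix.one_apply]
    · intro L hL hLi
      have := pow_ne_one_of_generator p one_pos hζ (r := 1) (by simp) (i := i + 1)
        (by omega) L hL hLi
      simpa using this

/-- The torus element used is `diag(ζ ^ (1 - n), ζ, …, ζ)`, whose multiplier is `ζ ^ n`. -/
theorem van_sl {d n : ℕ} (hcard : Fintype.card k = p ^ d) (hn : 2 ≤ n) {i : ℕ}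
    (hi : Nat.gcd n (p ^ d - 1) * (i + 1) < d * (p - 1)) :
    Van (Representation.trivial (ZMod p) (Matrix.SpecialLinearGroup (Fin n) k) (ZMod p))
      (i + 1) := by
  obtain ⟨m, rfl⟩ : ∃ m, n = m + 1 + 1 := ⟨n - 2, by omega⟩
  obtain ⟨ζ, hζ⟩ := exists_generator hcard
  have hgcd : 0 < Nat.gcd (m + 1 + 1) (p ^ d - 1) := Nat.gcd_pos_of_pos_left _ (by omega)
  have hi' : i + 1 < d * (p - 1) := lt_of_le_of_lt (Nat.le_mul_of_pos_left _ hgcd) hi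
  let f : GL (Fin (m + 1)) k →* Matrix.SpecialLinearGroup (Fin (m + 1 + 1)) k :=
    { toFun := fun A => ⟨blk (A.1.det)⁻¹ 0 A.1, by
        rw [blk_det]
        exact inv_mul_cancel₀ ((Matrix.isUnit_iff_isUnit_det A.1).mp A.isUnit).ne_zero⟩
      map_one' := Subtype.ext (by simp [blk_one])
      map_mul' := fun A B => Subtype.ext (by
        show blk ((A * B).1.det)⁻¹ 0 (A * B).1 = blk (A.1.det)⁻¹ 0 A.1 * blk (B.1.det)⁻¹ 0 B.1
        rw [blk_mul]
        simp [mul_comm]) }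
  let j : Matrix.SpecialLinearGroup (Fin (m + 1 + 1)) k →*
      Matrix (Fin (m + 1 + 1)) (Fin (m + 1 + 1)) k :=
    { toFun := Subtype.val, map_one' := rfl, map_mul' := fun _ _ => rfl }
  refine van_step p j Subtype.val_injective
    (fun x hx => sl_transitive x hx) f (fun A => (A.1.det)⁻¹) (fun A => rfl)
    (fun v => ⟨⟨blk 1 v 1, by simp [blk_det]⟩, rfl⟩)
    (f (Units.map (Matrix.scalar (Fin (m + 1))).toMonoidHom ζ)) ((ζ : k) ^ (m + 1))⁻¹ ζ ?_ i ?_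
    (van_gl p hcard hi' m)
  · show blk _ 0 _ = blk _ 0 _
    have h1 : Matrix.scalar (Fin (m + 1)) (ζ : k) = (ζ : k) • 1 := by
      rw [Matrix.scalar_apply, ← Matrix.smul_one_eq_diagonal]
    have h2 : (Units.map (Matrix.scalar (Fin (m + 1))).toMonoidHom ζ).1 = (ζ : k) • 1 := h1
    rw [h2, Matrix.det_smul, Matrix.det_one, mul_one, Fintype.card_fin]
  · intro L hL hLi
    have := pow_ne_one_of_generator p hgcd hζ dvd_rfl hi L hL hLi
    rwa [div_inv_eq_mul, ← pow_succ']

end Linear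

/-- **Quillen's vanishing theorem for `SL_n`.** If `𝕜` is a finite field of characteristic `p`
and cardinality `p ^ d`, and `h := gcd(n, p ^ d - 1)`, then `H^i(SL_n(𝕜), 𝔽_p)` (with trivial
coefficients) vanishes for `0 < i < d * (p - 1) / h`. -/
theorem quillen_vanishing_sln
    (p d n : ℕ) [Fact p.Prime] (𝕜 : Type) [Field 𝕜] [Fintype 𝕜] [CharP 𝕜 p]
    (hcard : Fintype.card 𝕜 = p ^ d) (hn : 2 ≤ n)
    (i : ℕ) (hi : 0 < i)
    (hlt : (i : ℚ) < (d : ℚ) * ((p : ℚ) - 1) / (Nat.gcd n (p ^ d - 1) : ℚ)) :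
    Subsingleton
      (groupCohomology
        (Rep.trivial (ZMod p) (Matrix.SpecialLinearGroup (Fin n) 𝕜) (ZMod p)) i) := by
  obtain ⟨i, rfl⟩ := Nat.exists_eq_succ_of_ne_zero hi.ne'
  refine van_sl p hcard hn ?_
  have hgcd : 0 < Nat.gcd n (p ^ d - 1) := Nat.gcd_pos_of_pos_left _ (by omega)
  rw [lt_div_iff₀ (by exact_mod_cast hgcd)] at hlt
  have h1 : (1 : ℕ) ≤ p := (Fact.out : p.Prime).one_le
  rw [mul_comm]
  have : ((i + 1 : ℕ) * Nat.gcd n (p ^ d - 1) : ℚ) < ((d * (p - 1) : ℕ) : ℚ) := by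
    push_cast [h1] at *
    exact hlt
  exact_mod_cast this
end
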